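/- arXiv:2505.18712 — 3 statements merged into one kernel-verified Lean document; each statement's English description precedes it below -/
import Mathlib

section
/- Let A > 13 and δ > 0 be fixed and let h ∈ 𝓗(A,δ). Then there exist complex numbers α_1, …, α_{2⌊A⌋−1} and a constant C = C(A,h) such that for all x ∈ (0,4π) one has |H⁺(x) − Σ_{m=1}^{2⌊A⌋−1} α_m x^m| ≤ C·x^{2⌊A⌋}. -/
open MeasureTheory Real Complex

/-- The Bessel function of the first kind `J_ν(x)`, for `x > 0`, defined via its power series,
where `(x/2)^w := exp (w * log (x/2))` with the real logarithm. -/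
noncomputable def besselJ (ν : ℂ) (x : ℝ) : ℂ :=
  ∑' m : ℕ, ((-1) ^ m / ((Nat.factorial m : ℂ) * Complex.Gamma (m + ν + 1))) *
    Complex.exp ((2 * m + ν) * Real.log (x / 2))

/-- The integral transform `H⁺(x) = (2i/π) ∫_ℝ h(t) J_{2it}(x) t / cosh(πt) dt`. -/
noncomputable def Hplus (h : ℝ → ℝ) (x : ℝ) : ℂ :=
  (2 * Complex.I / (π : ℂ)) *
    ∫ t : ℝ, (h t : ℂ) * besselJ (2 * Complex.I * t) x * ((t : ℂ) / (Real.cosh (π * t) : ℂ))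

/-- `h : ℝ → ℝ` belongs to the class `𝓗(A, δ)`, witnessed by the holomorphic extension
`H : ℂ → ℂ` to the strip `{s : |Im s| ≤ A}`. -/
structure IsInHClass (A δ : ℝ) (h : ℝ → ℝ) (H : ℂ → ℂ) : Prop where
  nonneg : ∀ t : ℝ, 0 ≤ h t
  even : ∀ t : ℝ, h (-t) = h t
  not_zero : ∃ t : ℝ, h t ≠ 0
  extends_h : ∀ t : ℝ, H (t : ℂ) = (h t : ℂ)
  even_ext : ∀ s : ℂ, H (-s) = H s
  holo : DifferentiableOn ℂ H {s : ℂ | |s.im| ≤ A}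
  bound : ∃ C : ℝ, ∀ s : ℂ, |s.im| ≤ A → ‖H s‖ ≤ C * (1 + ‖s‖) ^ (-(2 + δ))

/-!
Integrating the power series of `J_{2it}` termwise and writing `y = x / 2` turns `H⁺(x)` into
`(2i/π) ∑_m (-1)^m / m! · y^{2m} ∫ H(s) s Γ(m + 1 + 2is)⁻¹ y^{2is} / cosh(πs) ds`.
Below the real axis `1 / Γ(m + 1 + 2is)` is `O(cosh(π Re s))`, uniformly in `m`: this is compensated
exactly by `1 / cosh(πs)`, so the decay of `H(s) s` alone makes the integrals converge. Moving the
line of integration down by `M = N - m` units with `N = ⌊A⌋` picks up the residues at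
`s = -(j + 1/2) i`, `j < M`, which are multiples of `y^{2j+1}`, and leaves an integral of size
`O(y^{2M})`. The terms with `m ≥ N` are `O(x^{2N})` without any shift.
-/

section

open Set Filter Topology Asymptotics

/-! ### Hyperbolic functions -/

lemma one_add_sq_div_two_le_cosh (x : ℝ) : 1 + x ^ 2 / 2 ≤ Real.cosh x := by
  simpa [Finset.sum_range_succ] using
    sum_le_hasSum (Finset.range 2) (fun n _ => by rw [pow_mul]; positivity) (Real.hasSum_cosh x)

lemma half_cosh_le_abs_sinh {x : ℝ} (hx : 1 ≤ |x|) : Real.cosh x / 2 ≤ |Real.sinh x| := by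
  rw [Real.abs_sinh, ← Real.cosh_abs, Real.cosh_eq, Real.sinh_eq]
  have hexp : 2 ≤ Real.exp |x| := by linarith [Real.add_one_le_exp |x|]
  have hinv : Real.exp (-|x|) ≤ 2⁻¹ := by
    rw [Real.exp_neg]
    exact inv_anti₀ two_pos hexp
  linarith

lemma sqrt_cosh_two_mul_le (x : ℝ) : √(Real.cosh (2 * x)) ≤ √2 * Real.cosh x := by
  rw [← Real.sqrt_sq (Real.cosh_pos x).le, ← Real.sqrt_mul zero_le_two, Real.cosh_two_mul,
    Real.sinh_sq]
  exact Real.sqrt_le_sqrt (by linarith)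

lemma abs_sinh_re_le_norm_cosh (z : ℂ) : |Real.sinh z.re| ≤ ‖Complex.cosh z‖ := by
  have h := abs_norm_sub_norm_le (Complex.exp z) (-Complex.exp (-z))
  rw [norm_neg, Complex.norm_exp, Complex.norm_exp, Complex.neg_re, sub_neg_eq_add] at h
  rw [Real.sinh_eq, Complex.cosh, abs_div, norm_div, Complex.norm_ofNat, abs_two]
  gcongr

lemma cosh_pi_mul_eq_zero_iff {s : ℂ} :
    Complex.cosh (π * s) = 0 ↔ ∃ k : ℤ, s = (k + 1 / 2) * I := by
  rw [← Complex.cos_mul_I, Complex.cos_eq_zero_iff]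
  have hπ : (π : ℂ) ≠ 0 := Complex.ofReal_ne_zero.2 Real.pi_ne_zero
  constructor
  · rintro ⟨k, hk⟩
    refine ⟨-(k + 1), mul_left_cancel₀ hπ ?_⟩
    push_cast
    linear_combination (-I) * hk + (π * s) * Complex.I_sq
  · rintro ⟨k, rfl⟩
    refine ⟨-(k + 1), ?_⟩
    push_cast
    linear_combination π * (k + 1 / 2) * Complex.I_sq

lemma cosh_pi_mul_neg_I_div_two : Complex.cosh (π * (-I / 2)) = 0 :=
  cosh_pi_mul_eq_zero_iff.2 ⟨-1, by push_cast; ring⟩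

lemma eq_neg_I_div_two_of_cosh_pi_mul_eq_zero {s : ℂ} (hs : s.im ∈ Icc (-1) 0)
    (h : Complex.cosh (π * s) = 0) : s = -I / 2 := by
  obtain ⟨k, rfl⟩ := cosh_pi_mul_eq_zero_iff.1 h
  have him : ((k + 1 / 2 : ℂ) * I).im = k + 1 / 2 := by simp
  rw [him] at hs
  have hk₁ : -2 < k := by exact_mod_cast (by linarith [hs.1] : (-2 : ℝ) < k)
  have hk₂ : k < 0 := by exact_mod_cast (by linarith [hs.2] : (k : ℝ) < 0)
  obtain rfl : k = -1 := by omega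
  push_cast
  ring

lemma cosh_pi_mul_sub_I (s : ℂ) : Complex.cosh (π * (s - I)) = -Complex.cosh (π * s) := by
  rw [mul_sub, Complex.cosh_sub, Complex.cosh_mul_I, Complex.sinh_mul_I]
  simp

lemma deriv_cosh_pi_mul_neg_I_div_two_ne_zero :
    deriv (fun s : ℂ => Complex.cosh (π * s)) (-I / 2) ≠ 0 := by
  have hderiv : HasDerivAt (fun s : ℂ => Complex.cosh (π * s))
      (Complex.sinh (π * (-I / 2)) * (π * 1)) (-I / 2) :=
    ((hasDerivAt_id _).const_mul (π : ℂ)).ccosh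
  have hsinh : Complex.sinh (π * (-I / 2)) ^ 2 = -1 := by
    have := Complex.cosh_sq (π * (-I / 2))
    rw [cosh_pi_mul_neg_I_div_two] at this
    linear_combination -this
  have hsinh_ne : Complex.sinh (π * (-I / 2)) ≠ 0 := fun h => by simp [h] at hsinh
  rw [hderiv.deriv, mul_one]
  exact mul_ne_zero hsinh_ne (Complex.ofReal_ne_zero.2 Real.pi_ne_zero)

lemma tendsto_inv_cosh_cocompact : Tendsto (fun x => (Real.cosh x)⁻¹) (cocompact ℝ) (𝓝 0) := by
  refine Tendsto.inv_tendsto_atTop (tendsto_atTop_mono (fun x => ?_) tendsto_norm_cocompact_atTop)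
  rw [Real.norm_eq_abs, ← Real.cosh_abs]
  nlinarith [one_add_sq_div_two_le_cosh |x|, sq_nonneg (|x| - 1)]

lemma tendsto_inv_cosh_pi_mul_cocompact :
    Tendsto (fun x => (Real.cosh (π * x))⁻¹) (cocompact ℝ) (𝓝 0) :=
  tendsto_inv_cosh_cocompact.comp (tendsto_cocompact_mul_left₀ Real.pi_ne_zero)

lemma integrable_inv_cosh : Integrable fun x => (Real.cosh x)⁻¹ := by
  refine (integrable_inv_one_add_sq.const_mul 2).mono'
    (Real.continuous_cosh.inv₀ fun x => (Real.cosh_pos x).ne').aestronglyMeasurable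
    (Eventually.of_forall fun x => ?_)
  rw [Real.norm_of_nonneg (inv_pos.2 (Real.cosh_pos x)).le, ← div_eq_mul_inv,
    inv_le_comm₀ (Real.cosh_pos x) (by positivity), inv_div]
  linarith [one_add_sq_div_two_le_cosh x, sq_nonneg x]

lemma tendsto_sinh_atTop : Tendsto Real.sinh atTop atTop :=
  tendsto_atTop_mono' _ ((eventually_ge_atTop 0).mono fun _ => Real.self_le_sinh_iff.2) tendsto_id

lemma tendsto_sinh_atBot : Tendsto Real.sinh atBot atBot :=
  tendsto_atBot_mono' _ ((eventually_le_atBot 0).mono fun _ => Real.sinh_le_self_iff.2) tendsto_id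

lemma integral_inv_cosh : ∫ x, (Real.cosh x)⁻¹ = π := by
  have hderiv (x : ℝ) : HasDerivAt (fun x => Real.arctan (Real.sinh x)) (Real.cosh x)⁻¹ x := by
    convert (Real.hasDerivAt_sinh x).arctan using 1
    rw [add_comm 1, ← Real.cosh_sq]
    field_simp [(Real.cosh_pos x).ne']
  rw [integral_of_hasDerivAt_of_tendsto hderiv integrable_inv_cosh
    ((tendsto_nhds_of_tendsto_nhdsWithin Real.tendsto_arctan_atBot).comp tendsto_sinh_atBot)
    ((tendsto_nhds_of_tendsto_nhdsWithin Real.tendsto_arctan_atTop).comp tendsto_sinh_atTop)]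
  ring

lemma integrable_const_div_cosh_pi_mul (c : ℂ) :
    Integrable fun u : ℝ => c / (Real.cosh (π * u) : ℂ) := by
  simp only [div_eq_mul_inv, ← Complex.ofReal_inv]
  exact (integrable_inv_cosh.comp_mul_left' Real.pi_ne_zero).ofReal.const_mul c

lemma integral_const_div_cosh_pi_mul (c : ℂ) :
    ∫ u : ℝ, c / (Real.cosh (π * u) : ℂ) = c := by
  have hreal : ∫ u : ℝ, (Real.cosh (π * u))⁻¹ = 1 := by
    rw [Measure.integral_comp_mul_left (fun x => (Real.cosh x)⁻¹), integral_inv_cosh, abs_inv,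
      abs_of_pos Real.pi_pos, smul_eq_mul, inv_mul_cancel₀ Real.pi_ne_zero]
  simp only [div_eq_mul_inv, ← Complex.ofReal_inv]
  rw [integral_const_mul, integral_complex_ofReal, hreal, Complex.ofReal_one, mul_one]

lemma norm_div_cosh_le {z : ℂ} {c x : ℝ} (h : ‖z‖ ≤ c * Real.cosh x) :
    ‖z / (Real.cosh x : ℂ)‖ ≤ c := by
  rwa [norm_div, Complex.norm_real, Real.norm_of_nonneg (Real.cosh_pos x).le,
    div_le_iff₀ (Real.cosh_pos x)]

lemma integrable_div_cosh_pi_mul {F : ℝ → ℂ} {φ : ℝ → ℝ} (hF : Continuous F) (hφ : Integrable φ)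
    (hFφ : ∀ u, ‖F u‖ ≤ φ u * Real.cosh (π * u)) :
    Integrable fun u : ℝ => F u / (Real.cosh (π * u) : ℂ) := by
  refine hφ.mono' (Continuous.aestronglyMeasurable ?_)
    (Eventually.of_forall fun u => norm_div_cosh_le (hFφ u))
  exact hF.div (by fun_prop) fun u => Complex.ofReal_ne_zero.2 (Real.cosh_pos _).ne'

/-! ### Bounds for the Gamma function on vertical lines -/

lemma norm_betaIntegral_le {u v : ℂ} (hu : 0 < u.re) (hv : 0 < v.re) :
    ‖Complex.betaIntegral u v‖ ≤ ProbabilityTheory.beta u.re v.re := by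
  have hnorm : ((∫ x in (0 : ℝ)..1, ‖(x : ℂ) ^ (u - 1) * (1 - x : ℂ) ^ (v - 1)‖ : ℝ) : ℂ) =
      Complex.betaIntegral u.re v.re := by
    rw [Complex.betaIntegral, ← intervalIntegral.integral_ofReal]
    refine intervalIntegral.integral_congr_Ioo_of_le zero_le_one fun x hx => ?_
    have hx' : 0 < 1 - x := sub_pos.2 hx.2
    have hcast : (1 - x : ℂ) = ((1 - x : ℝ) : ℂ) := by push_cast; rfl
    rw [hcast, norm_mul, Complex.norm_cpow_eq_rpow_re_of_pos hx.1,
      Complex.norm_cpow_eq_rpow_re_of_pos hx', Complex.ofReal_mul, Complex.ofReal_cpow hx.1.le,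
      Complex.ofReal_cpow hx'.le]
    simp only [Complex.sub_re, Complex.one_re, Complex.ofReal_sub, Complex.ofReal_one]
  rw [ProbabilityTheory.beta_eq_betaIntegralReal _ _ hu hv, ← hnorm, Complex.ofReal_re]
  exact intervalIntegral.norm_integral_le_integral_norm zero_le_one

/-- Cross-multiplied form of: `‖Γ(σ + iv)‖ / Γ(σ)` is nondecreasing in `σ > 0`. -/
lemma norm_Gamma_mul_Gamma_le {a c : ℝ} (ha : 0 < a) (hac : a ≤ c) (v : ℝ) :
    ‖Complex.Gamma (a + v * I)‖ * Real.Gamma c ≤ ‖Complex.Gamma (c + v * I)‖ * Real.Gamma a := by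
  obtain rfl | hlt := hac.eq_or_lt
  · rfl
  have hd : 0 < c - a := sub_pos.2 hlt
  have hΓd := Real.Gamma_pos_of_pos hd
  have hΓc := Real.Gamma_pos_of_pos (ha.trans hlt)
  have hre : (a + v * I : ℂ).re = a := by simp
  have hB := Complex.Gamma_mul_Gamma_eq_betaIntegral (s := a + v * I) (t := (c - a : ℝ))
    (by rwa [hre]) (by rwa [Complex.ofReal_re])
  have hBle := norm_betaIntegral_le (u := a + v * I) (v := (c - a : ℝ))
    (by rwa [hre]) (by rwa [Complex.ofReal_re])
  rw [hre, Complex.ofReal_re, ProbabilityTheory.beta, add_sub_cancel, le_div_iff₀ hΓc] at hBle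
  have hsum : (a + v * I + (c - a : ℝ) : ℂ) = c + v * I := by push_cast; ring
  rw [hsum, Complex.Gamma_ofReal] at hB
  have hBnorm := congrArg norm hB
  rw [norm_mul, norm_mul, Complex.norm_real, Real.norm_of_nonneg hΓd.le] at hBnorm
  refine le_of_mul_le_mul_right ?_ hΓd
  calc _ = ‖Complex.Gamma (c + v * I)‖ * (‖Complex.betaIntegral (a + v * I) (c - a : ℝ)‖ *
          Real.Gamma c) := by linear_combination Real.Gamma c * hBnorm
    _ ≤ ‖Complex.Gamma (c + v * I)‖ * (Real.Gamma a * Real.Gamma (c - a)) := by gcongr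
    _ = _ := by ring

lemma norm_Gamma_one_half_add_mul_I_sq (v : ℝ) :
    ‖Complex.Gamma ((1 / 2 : ℝ) + v * I)‖ ^ 2 = π / Real.cosh (π * v) := by
  have hconj : 1 - (((1 / 2 : ℝ) : ℂ) + v * I) = starRingEnd ℂ ((1 / 2 : ℝ) + v * I) := by
    simp only [map_add, map_mul, Complex.conj_ofReal, Complex.conj_I]
    push_cast
    ring
  have hsin : Complex.sin (π * ((1 / 2 : ℝ) + v * I)) = Real.cosh (π * v) := by
    rw [show (π : ℂ) * ((1 / 2 : ℝ) + v * I) = π * v * I + π / 2 by push_cast; ring,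
      Complex.sin_add_pi_div_two, Complex.cos_mul_I]
    push_cast
    rfl
  have hreflect := Complex.Gamma_mul_Gamma_one_sub ((1 / 2 : ℝ) + v * I)
  rw [hconj, Complex.Gamma_conj, Complex.mul_conj, hsin] at hreflect
  rw [← Complex.normSq_eq_norm_sq]
  exact_mod_cast hreflect

lemma Gamma_re_le_norm_Gamma_mul_sqrt_cosh {s : ℂ} (hs : 1 / 2 ≤ s.re) :
    Real.Gamma s.re ≤ ‖Complex.Gamma s‖ * √(Real.cosh (π * s.im)) := by
  have hcosh := Real.cosh_pos (π * s.im)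
  have hcmp := norm_Gamma_mul_Gamma_le one_half_pos hs s.im
  have hhalf : ‖Complex.Gamma ((1 / 2 : ℝ) + s.im * I)‖ = √π / √(Real.cosh (π * s.im)) := by
    rw [← Real.sqrt_div Real.pi_pos.le, ← norm_Gamma_one_half_add_mul_I_sq,
      Real.sqrt_sq (norm_nonneg _)]
  rw [Complex.re_add_im, hhalf, Real.Gamma_one_half_eq, div_mul_eq_mul_div,
    div_le_iff₀ (Real.sqrt_pos.2 hcosh)] at hcmp
  refine le_of_mul_le_mul_left ?_ (Real.sqrt_pos.2 Real.pi_pos)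
  linarith

lemma one_half_le_Gamma {x : ℝ} (hx : 1 ≤ x) : 1 / 2 ≤ Real.Gamma x := by
  have one_le_Gamma {y : ℝ} (hy : 2 ≤ y) : 1 ≤ Real.Gamma y :=
    Real.Gamma_two ▸ Real.Gamma_strictMonoOn_Ici.monotoneOn (mem_Ici.2 le_rfl) hy hy
  rcases le_total 2 x with h | h
  · linarith [one_le_Gamma h]
  · have hstep := Real.Gamma_add_one (by linarith : x ≠ 0)
    nlinarith [one_le_Gamma (by linarith : 2 ≤ x + 1), Real.Gamma_pos_of_pos (by linarith : 0 < x)]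

lemma norm_inv_Gamma_le {s : ℂ} (hs : 1 ≤ s.re) :
    ‖(Complex.Gamma s)⁻¹‖ ≤ 2 * √(Real.cosh (π * s.im)) := by
  have hΓ : 0 < ‖Complex.Gamma s‖ :=
    norm_pos_iff.2 (Complex.Gamma_ne_zero_of_re_pos (by linarith))
  rw [norm_inv, inv_le_iff_one_le_mul₀ hΓ]
  linarith [one_half_le_Gamma hs, Gamma_re_le_norm_Gamma_mul_sqrt_cosh (by linarith : 1 / 2 ≤ s.re)]

/-! ### Shifting the contour across the poles of `1 / cosh (π s)` -/

lemma integral_add_mul_I_eq_of_tendsto_zero {E : Type*} [NormedAddCommGroup E] [NormedSpace ℂ E]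
    [CompleteSpace E] {q : ℂ → E} {φ : ℝ → ℝ} {a b : ℝ}
    (hq : DifferentiableOn ℂ q (Complex.im ⁻¹' uIcc a b)) (hφ : Tendsto φ (cocompact ℝ) (𝓝 0))
    (hqφ : ∀ᶠ x : ℝ in cocompact ℝ, ∀ y ∈ uIcc a b, ‖q (x + y * I)‖ ≤ φ x)
    (ha : Integrable fun x : ℝ => q (x + a * I)) (hb : Integrable fun x : ℝ => q (x + b * I)) :
    ∫ x : ℝ, q (x + a * I) = ∫ x : ℝ, q (x + b * I) := by
  have hside : Tendsto (fun x : ℝ => I • ∫ y in a..b, q (x + y * I)) (cocompact ℝ) (𝓝 0) := by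
    refine squeeze_zero_norm' (a := fun x => φ x * |b - a|) ?_ (by simpa using hφ.mul_const |b - a|)
    filter_upwards [hqφ] with x hx
    rw [norm_smul, Complex.norm_I, one_mul]
    exact intervalIntegral.norm_integral_le_of_norm_le_const fun y hy => hx y (uIoc_subset_uIcc hy)
  have hrect (R : ℝ) : (∫ x in (-R)..R, q (x + a * I)) - ∫ x in (-R)..R, q (x + b * I) =
      (I • ∫ y in a..b, q ((-R : ℝ) + y * I)) - I • ∫ y in a..b, q (R + y * I) := by
    have h := Complex.integral_boundary_rect_eq_zero_of_differentiableOn q ⟨-R, a⟩ ⟨R, b⟩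
      (hq.mono fun s hs => hs.2)
    rwa [add_sub_assoc, add_eq_zero_iff_eq_neg, neg_sub] at h
  have hlim := (intervalIntegral_tendsto_integral ha tendsto_neg_atTop_atBot tendsto_id).sub
    (intervalIntegral_tendsto_integral hb tendsto_neg_atTop_atBot tendsto_id)
  have hlim_zero := ((hside.mono_left atBot_le_cocompact).comp tendsto_neg_atTop_atBot).sub
    (hside.mono_left atTop_le_cocompact)
  rw [sub_zero] at hlim_zero
  exact sub_eq_zero.1 (tendsto_nhds_unique hlim (hlim_zero.congr fun R => (hrect R).symm))

lemma exists_differentiableOn_eq_div {f g : ℂ → ℂ} {S : Set ℂ} {p : ℂ} (hS : S ∈ 𝓝 p)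
    (hf : DifferentiableOn ℂ f S) (hg : DifferentiableOn ℂ g S) (hfp : f p = 0) (hgp : g p = 0)
    (hg' : deriv g p ≠ 0) (hg₀ : ∀ s ∈ S, g s = 0 → s = p) :
    ∃ q : ℂ → ℂ, DifferentiableOn ℂ q S ∧ ∀ s ≠ p, q s = f s / g s := by
  have hslope {k : ℂ → ℂ} (hkp : k p = 0) (s : ℂ) : (s - p) * dslope k p s = k s := by
    simpa [hkp] using sub_smul_dslope k p s
  refine ⟨fun s => dslope f p s / dslope g p s,
    ((Complex.differentiableOn_dslope hS).2 hf).div ((Complex.differentiableOn_dslope hS).2 hg)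
      fun s hs h => ?_, fun s hsp => ?_⟩
  · have hsp : s = p := hg₀ s hs (by rw [← hslope hgp, h, mul_zero])
    rw [hsp, dslope_same] at h
    exact hg' h
  · rw [← hslope hfp, ← hslope hgp, mul_div_mul_left _ _ (sub_ne_zero.2 hsp)]

section ContourShift

variable {f : ℂ → ℂ} {φ : ℝ → ℝ}

lemma integrable_comp_add_mul_I_div_cosh {S : Set ℝ} (hφ : Integrable φ)
    (hf : DifferentiableOn ℂ f (Complex.im ⁻¹' S))
    (hfφ : ∀ s : ℂ, s.im ∈ S → ‖f s‖ ≤ φ s.re * Real.cosh (π * s.re)) {b : ℝ} (hb : b ∈ S) :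
    Integrable fun u : ℝ => f (u + b * I) / (Real.cosh (π * u) : ℂ) :=
  integrable_div_cosh_pi_mul
    (hf.continuousOn.comp_continuous (by fun_prop) fun u => by simpa using hb) hφ
    fun u => by simpa using hfφ (u + b * I) (by simpa using hb)

lemma norm_div_cosh_pi_mul_le {s z : ℂ} {c : ℝ} (hs : 1 ≤ |s.re|)
    (hz : ‖z‖ ≤ c * Real.cosh (π * s.re)) : ‖z / Complex.cosh (π * s)‖ ≤ 2 * c := by
  have hcosh := Real.cosh_pos (π * s.re)
  have hπ : 1 ≤ |π * s.re| := by
    rw [abs_mul, abs_of_pos Real.pi_pos]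
    nlinarith [Real.pi_gt_three]
  have hlower : Real.cosh (π * s.re) / 2 ≤ ‖Complex.cosh (π * s)‖ := by
    simpa using (half_cosh_le_abs_sinh hπ).trans
      (by simpa using abs_sinh_re_le_norm_cosh (π * s))
  have hc : 0 ≤ c := nonneg_of_mul_nonneg_left ((norm_nonneg z).trans hz) hcosh
  rw [norm_div, div_le_iff₀ (by linarith)]
  nlinarith

lemma norm_sub_div_cosh_pi_mul_le {s z w : ℂ} {c : ℝ} (hs : 1 ≤ |s.re|)
    (hz : ‖z‖ ≤ c * Real.cosh (π * s.re)) :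
    ‖(z - w) / Complex.cosh (π * s)‖ ≤ 2 * (c + ‖w‖ * (Real.cosh (π * s.re))⁻¹) := by
  refine norm_div_cosh_pi_mul_le hs ((norm_sub_le _ _).trans ?_)
  rw [add_mul, inv_mul_cancel_right₀ (Real.cosh_pos _).ne']
  gcongr

lemma exists_differentiableOn_eq_sub_div_cosh_pi_mul
    (hf : DifferentiableOn ℂ f (Complex.im ⁻¹' Icc (-1) 0)) :
    ∃ q : ℂ → ℂ, DifferentiableOn ℂ q (Complex.im ⁻¹' Icc (-1) 0) ∧
      ∀ s ≠ -I / 2, q s = (f s - f (-I / 2)) / Complex.cosh (π * s) := by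
  have him : (-I / 2 : ℂ).im = -1 / 2 := by simp
  have hstrip : Complex.im ⁻¹' Icc (-1) 0 ∈ 𝓝 (-I / 2) :=
    Complex.continuous_im.continuousAt.preimage_mem_nhds
      (Icc_mem_nhds (by rw [him]; norm_num) (by rw [him]; norm_num))
  exact exists_differentiableOn_eq_div hstrip (hf.sub_const _) (by fun_prop) (sub_self _)
    cosh_pi_mul_neg_I_div_two deriv_cosh_pi_mul_neg_I_div_two_ne_zero
    fun _ => eq_neg_I_div_two_of_cosh_pi_mul_eq_zero

/-- Subtracting the constant `f (-i/2)` removes the pole, and `∫ du / cosh (π u) = 1` accounts for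
that constant on both boundary lines. -/
lemma integral_div_cosh_add_integral_sub_I_div_cosh (hφ : Integrable φ)
    (hφ₀ : Tendsto φ (cocompact ℝ) (𝓝 0))
    (hf : DifferentiableOn ℂ f (Complex.im ⁻¹' Icc (-1) 0))
    (hfφ : ∀ s : ℂ, s.im ∈ Icc (-1) 0 → ‖f s‖ ≤ φ s.re * Real.cosh (π * s.re)) :
    (∫ u : ℝ, f u / (Real.cosh (π * u) : ℂ)) + ∫ u : ℝ, f (u - I) / (Real.cosh (π * u) : ℂ) =
      2 * f (-I / 2) := by
  obtain ⟨q, hq, hq_eq⟩ := exists_differentiableOn_eq_sub_div_cosh_pi_mul hf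
  have hq_top (u : ℝ) : q (u + (0 : ℝ) * I) =
      f u / (Real.cosh (π * u) : ℂ) - f (-I / 2) / (Real.cosh (π * u) : ℂ) := by
    rw [hq_eq _ fun h => by have := congrArg Complex.im h; norm_num at this]
    simp [sub_div]
  have hq_bot (u : ℝ) : q (u + (-1 : ℝ) * I) =
      f (-I / 2) / (Real.cosh (π * u) : ℂ) - f (u - I) / (Real.cosh (π * u) : ℂ) := by
    rw [hq_eq _ fun h => by have := congrArg Complex.im h; norm_num at this]
    simp only [Complex.ofReal_neg, Complex.ofReal_one, neg_one_mul, ← sub_eq_add_neg,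
      cosh_pi_mul_sub_I, Complex.ofReal_cosh, Complex.ofReal_mul]
    ring
  have hside : Tendsto (fun x => 2 * (φ x + ‖f (-I / 2)‖ * (Real.cosh (π * x))⁻¹))
      (cocompact ℝ) (𝓝 0) := by
    simpa using
      (hφ₀.add (tendsto_inv_cosh_pi_mul_cocompact.const_mul ‖f (-I / 2)‖)).const_mul 2
  have hq_side : ∀ᶠ x : ℝ in cocompact ℝ, ∀ y ∈ uIcc (0 : ℝ) (-1),
      ‖q (x + y * I)‖ ≤ 2 * (φ x + ‖f (-I / 2)‖ * (Real.cosh (π * x))⁻¹) := by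
    filter_upwards [tendsto_norm_cocompact_atTop.eventually_ge_atTop 1] with x hx y hy
    rw [uIcc_of_ge (by norm_num)] at hy
    have hre : (x + y * I : ℂ).re = x := by simp
    have hne : (x + y * I : ℂ) ≠ -I / 2 := fun h => by
      have hx0 : x = 0 := by simpa using congrArg Complex.re h
      norm_num [hx0] at hx
    simpa [hq_eq _ hne] using norm_sub_div_cosh_pi_mul_le (w := f (-I / 2)) (by rwa [hre])
      (hfφ (x + y * I) (by simpa using hy))
  have hint_top : Integrable fun u : ℝ => f u / (Real.cosh (π * u) : ℂ) := by
    simpa using integrable_comp_add_mul_I_div_cosh hφ hf hfφ (b := 0) (by norm_num)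
  have hint_bot : Integrable fun u : ℝ => f (u - I) / (Real.cosh (π * u) : ℂ) := by
    simpa [← sub_eq_add_neg] using
      integrable_comp_add_mul_I_div_cosh hφ hf hfφ (b := -1) (by norm_num)
  have hint_p := integrable_const_div_cosh_pi_mul (f (-I / 2))
  have hshift := integral_add_mul_I_eq_of_tendsto_zero
    (by rwa [uIcc_of_ge (by norm_num : (-1 : ℝ) ≤ 0)]) hside hq_side
    ((hint_top.sub hint_p).congr (.of_forall fun u => (hq_top u).symm))
    ((hint_p.sub hint_bot).congr (.of_forall fun u => (hq_bot u).symm))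
  simp only [hq_top, hq_bot] at hshift
  rw [integral_sub hint_top hint_p, integral_sub hint_p hint_bot,
    integral_const_div_cosh_pi_mul] at hshift
  linear_combination hshift

lemma integral_div_cosh_eq_sum_add_integral_sub_mul_I_div_cosh (hφ : Integrable φ)
    (hφ₀ : Tendsto φ (cocompact ℝ) (𝓝 0)) (M : ℕ)
    (hf : DifferentiableOn ℂ f (Complex.im ⁻¹' Icc (-M) 0))
    (hfφ : ∀ s : ℂ, s.im ∈ Icc (-M : ℝ) 0 → ‖f s‖ ≤ φ s.re * Real.cosh (π * s.re)) :
    ∫ u : ℝ, f u / (Real.cosh (π * u) : ℂ) =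
      ∑ j ∈ Finset.range M, 2 * (-1) ^ j * f (-I / 2 - j * I) +
        (-1) ^ M * ∫ u : ℝ, f (u - M * I) / (Real.cosh (π * u) : ℂ) := by
  induction M with
  | zero => simp
  | succ M ih =>
    have hsub : Icc (-M : ℝ) 0 ⊆ Icc (-(M + 1 : ℕ) : ℝ) 0 :=
      Icc_subset_Icc_left (by push_cast; linarith)
    have hmaps {s : ℂ} (hs : s.im ∈ Icc (-1) 0) : (s - M * I).im ∈ Icc (-(M + 1 : ℕ) : ℝ) 0 := by
      have him : (s - M * I).im = s.im - M := by simp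
      rw [him, mem_Icc]
      push_cast
      constructor <;> linarith [hs.1, hs.2, M.cast_nonneg (α := ℝ)]
    have hstep := integral_div_cosh_add_integral_sub_I_div_cosh hφ hφ₀
      (f := fun s => f (s - M * I)) (hf.comp (by fun_prop) fun s hs => hmaps hs)
      fun s hs => by simpa using hfφ (s - M * I) (hmaps hs)
    have hassoc (u : ℝ) : (u - I - M * I : ℂ) = u - (M + 1 : ℕ) * I := by push_cast; ring
    simp only [hassoc] at hstep
    rw [ih (hf.mono fun s hs => hsub hs) fun s hs => hfφ s (hsub hs), Finset.sum_range_succ,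
      pow_succ]
    linear_combination (-1) ^ M * hstep

end ContourShift

/-! ### Odd Taylor expansions -/

/-- The functions `F : ℝ → ℂ` with an expansion
`F x = ∑_{j < N} c_j x ^ (2 j + 1) + O(x ^ (2 N))` along the filter `l`. -/
def oddTaylor (N : ℕ) (l : Filter ℝ) : Submodule ℂ (ℝ → ℂ) where
  carrier := {F | ∃ c : ℕ → ℂ,
    (fun x => F x - ∑ j ∈ Finset.range N, c j * (x : ℂ) ^ (2 * j + 1)) =O[l] fun x => x ^ (2 * N)}
  add_mem' := by
    rintro F G ⟨c, hc⟩ ⟨d, hd⟩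
    refine ⟨c + d, (hc.add hd).congr_left fun x => ?_⟩
    simp only [Pi.add_apply, add_mul, Finset.sum_add_distrib]
    ring
  zero_mem' := ⟨0, by simpa using isBigO_zero _ _⟩
  smul_mem' := by
    rintro a F ⟨c, hc⟩
    refine ⟨a • c, (hc.const_mul_left a).congr_left fun x => ?_⟩
    simp only [Pi.smul_apply, smul_eq_mul, mul_sub, Finset.mul_sum, mul_assoc]

section OddTaylor

variable {N : ℕ} {l : Filter ℝ} {F G : ℝ → ℂ}

lemma mem_oddTaylor_of_isBigO (hF : F =O[l] fun x => x ^ (2 * N)) : F ∈ oddTaylor N l :=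
  ⟨0, by simpa using hF⟩

lemma oddTaylor_congr (hFG : F =ᶠ[l] G) (hF : F ∈ oddTaylor N l) : G ∈ oddTaylor N l := by
  obtain ⟨c, hc⟩ := hF
  exact ⟨c, hc.congr' (hFG.sub .rfl) .rfl⟩

lemma oddTaylor_mono {l' : Filter ℝ} (hl : l' ≤ l) (hF : F ∈ oddTaylor N l) :
    F ∈ oddTaylor N l' := by
  obtain ⟨c, hc⟩ := hF
  exact ⟨c, hc.mono hl⟩

lemma comp_div_mem_oddTaylor {l' : Filter ℝ} {r : ℝ} (hr : Tendsto (· / r) l' l)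
    (hF : F ∈ oddTaylor N l) : (fun x => F (x / r)) ∈ oddTaylor N l' := by
  obtain ⟨c, hc⟩ := hF
  refine ⟨fun j => c j / (r : ℂ) ^ (2 * j + 1), ?_⟩
  have hpow : (fun x : ℝ => (x / r) ^ (2 * N)) =O[l'] fun x => x ^ (2 * N) := by
    simpa only [div_eq_inv_mul, mul_pow] using isBigO_const_mul_self ((r⁻¹) ^ (2 * N)) _ l'
  refine ((hc.comp_tendsto hr).trans hpow).congr_left fun x => ?_
  simp only [Function.comp_apply, Complex.ofReal_div, div_pow, mul_div_assoc', div_mul_eq_mul_div]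

lemma pow_mul_mem_oddTaylor {M : ℕ} (k : ℕ) (hF : F ∈ oddTaylor M l) :
    (fun x : ℝ => (x : ℂ) ^ (2 * k) * F x) ∈ oddTaylor (k + M) l := by
  obtain ⟨c, hc⟩ := hF
  refine ⟨fun j => if j < k then 0 else c (j - k), ?_⟩
  have hpow : (fun x : ℝ => (x : ℂ) ^ (2 * k)) =O[l] fun x => x ^ (2 * k) :=
    isBigO_of_le _ fun x => by simp
  refine (hpow.mul hc).congr (fun x => ?_) fun x => by ring
  have hlow : ∑ j ∈ Finset.range k,
      (if j < k then 0 else c (j - k)) * (x : ℂ) ^ (2 * j + 1) = 0 :=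
    Finset.sum_eq_zero fun j hj => by rw [if_pos (Finset.mem_range.1 hj), zero_mul]
  rw [Finset.sum_range_add, hlow, zero_add, mul_sub, Finset.mul_sum]
  refine congrArg _ (Finset.sum_congr rfl fun j _ => ?_)
  beta_reduce
  rw [if_neg (by omega), add_tsub_cancel_left]
  ring

lemma isBigO_principal_tsum {α E : Type*} [NormedAddCommGroup E] [CompleteSpace E] {S : Set α}
    {T : ℕ → α → E} {b : ℕ → ℝ} {g : α → ℝ} (hb : Summable b)
    (hT : ∀ m, ∀ y ∈ S, ‖T m y‖ ≤ b m * g y) : (fun y => ∑' m, T m y) =O[𝓟 S] g := by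
  refine isBigO_principal.2 ⟨‖∑' m, b m‖, fun y hy => ?_⟩
  rw [← norm_mul]
  exact (tsum_of_norm_bounded (hb.hasSum.mul_right (g y)) fun m => hT m y hy).trans
    (Real.le_norm_self _)

lemma tsum_mem_oddTaylor {X L : ℝ} {a : ℕ → ℂ} {W : ℕ → ℝ → ℂ}
    (ha : Summable fun m => ‖a m‖ * X ^ (2 * m))
    (hW : ∀ m < N, W m ∈ oddTaylor (N - m) (𝓟 (Ioc 0 X)))
    (hWL : ∀ m, ∀ y ∈ Ioc 0 X, ‖W m y‖ ≤ L) :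
    (fun y : ℝ => ∑' m, a m * (y : ℂ) ^ (2 * m) * W m y) ∈ oddTaylor N (𝓟 (Ioc 0 X)) := by
  have hterm (m k : ℕ) {y : ℝ} (hy : y ∈ Ioc 0 X) :
      ‖a (m + k) * (y : ℂ) ^ (2 * (m + k)) * W (m + k) y‖ ≤
        ‖a (m + k)‖ * X ^ (2 * (m + k)) * (L / X ^ (2 * k)) * y ^ (2 * k) := by
    have hX := hy.1.trans_le hy.2
    rw [norm_mul, norm_mul, norm_pow, Complex.norm_real, Real.norm_of_nonneg hy.1.le]
    calc _ ≤ ‖a (m + k)‖ * (X ^ (2 * m) * y ^ (2 * k)) * L := by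
          rw [mul_add, pow_add]
          have := hy.1.le
          gcongr
          exacts [hy.2, hWL _ y hy]
      _ = _ := by
          rw [mul_add, pow_add]
          field_simp
  have hsum {y : ℝ} (hy : y ∈ Ioc 0 X) : Summable fun m => a m * (y : ℂ) ^ (2 * m) * W m y :=
    .of_norm_bounded (ha.mul_right L) fun m => by simpa using hterm m 0 hy
  have hhead : (∑ m ∈ Finset.range N, a m • fun y : ℝ => (y : ℂ) ^ (2 * m) * W m y) ∈
      oddTaylor N (𝓟 (Ioc 0 X)) := by
    refine Submodule.sum_smul_mem _ _ fun m hm => ?_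
    have hmN := Finset.mem_range.1 hm
    simpa [Nat.add_sub_of_le hmN.le] using pow_mul_mem_oddTaylor m (hW m hmN)
  have htail : (fun y : ℝ => ∑' m, a (m + N) * (y : ℂ) ^ (2 * (m + N)) * W (m + N) y) ∈
      oddTaylor N (𝓟 (Ioc 0 X)) :=
    mem_oddTaylor_of_isBigO <| isBigO_principal_tsum
      (((summable_nat_add_iff N).2 ha).mul_right _) fun m y hy => hterm m N hy
  refine oddTaylor_congr (eventually_principal.2 fun y hy => ?_) (add_mem hhead htail)
  simp only [Pi.add_apply, Finset.sum_apply, Pi.smul_apply, smul_eq_mul, ← mul_assoc]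
  exact (hsum hy).sum_add_tsum_nat_add N

lemma exists_sum_Icc_eq_sum_odd (c : ℕ → ℂ) (N : ℕ) :
    ∃ α : ℕ → ℂ, (∀ m, Even m → α m = 0) ∧ ∀ z : ℂ,
      ∑ m ∈ Finset.Icc 1 (2 * N - 1), α m * z ^ m =
        ∑ j ∈ Finset.range N, c j * z ^ (2 * j + 1) := by
  refine ⟨fun m => if Odd m then c (m / 2) else 0,
    fun m hm => if_neg (Nat.not_odd_iff_even.2 hm), fun z => ?_⟩
  refine (Finset.sum_of_injOn (fun j => 2 * j + 1) (fun i _ j _ hij => by simpa using hij)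
    (fun j hj => ?_) (fun m hm hodd => ?_) fun j _ => ?_).symm
  · simp only [Finset.coe_range, mem_Iio] at hj
    simp only [Finset.coe_Icc, mem_Icc]
    omega
  · beta_reduce
    rw [if_neg, zero_mul]
    rintro ⟨j, rfl⟩
    rw [Finset.mem_Icc] at hm
    exact hodd ⟨j, Finset.mem_coe.2 (Finset.mem_range.2 (by omega)), rfl⟩
  · beta_reduce
    rw [if_pos (odd_two_mul_add_one j)]
    congr 2
    omega

end OddTaylor

/-! ### The Bessel transform -/

/-- The Mellin-type transform `∫ g(u) y ^ (2iu) / cosh(πu) du`. -/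
noncomputable def coshMellin (g : ℂ → ℂ) (y : ℝ) : ℂ :=
  ∫ u : ℝ, g u * (y : ℂ) ^ (2 * I * u) / (Real.cosh (π * u) : ℂ)

lemma norm_ofReal_cpow_two_mul_I_mul {y : ℝ} (hy : 0 < y) (s : ℂ) :
    ‖(y : ℂ) ^ (2 * I * s)‖ = y ^ (-2 * s.im) := by
  rw [Complex.norm_cpow_eq_rpow_re_of_pos hy]
  simp

lemma norm_mul_ofReal_cpow_two_mul_I_mul {y : ℝ} (hy : 0 < y) (z : ℂ) (u : ℝ) :
    ‖z * (y : ℂ) ^ (2 * I * u)‖ = ‖z‖ := by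
  rw [norm_mul, norm_ofReal_cpow_two_mul_I_mul hy, Complex.ofReal_im, mul_zero, Real.rpow_zero,
    mul_one]

section CoshMellin

variable {g : ℂ → ℂ} {φ : ℝ → ℝ} {y : ℝ}

lemma norm_coshMellin_le (hφ : Integrable φ) (hgφ : ∀ u : ℝ, ‖g u‖ ≤ φ u * Real.cosh (π * u))
    (hy : 0 < y) : ‖coshMellin g y‖ ≤ ∫ u, φ u :=
  norm_integral_le_of_norm_le hφ <| .of_forall fun u => norm_div_cosh_le <| by
    rw [norm_mul_ofReal_cpow_two_mul_I_mul hy]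
    exact hgφ u

lemma aestronglyMeasurable_coshMellin_integrand (hg : Continuous fun u : ℝ => g u) (hy : 0 < y) :
    AEStronglyMeasurable fun u : ℝ => g u * (y : ℂ) ^ (2 * I * u) / (Real.cosh (π * u) : ℂ) := by
  have hpow : Continuous fun u : ℝ => (y : ℂ) ^ (2 * I * u) :=
    Continuous.const_cpow (by fun_prop) (.inl (Complex.ofReal_ne_zero.2 hy.ne'))
  exact ((hg.mul hpow).div (by fun_prop) fun u =>
    Complex.ofReal_ne_zero.2 (Real.cosh_pos _).ne').aestronglyMeasurable

lemma coshMellin_eq_sum_add (hφ : Integrable φ) (hφ₀ : Tendsto φ (cocompact ℝ) (𝓝 0)) {M : ℕ}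
    (hg : DifferentiableOn ℂ g (Complex.im ⁻¹' Icc (-M) 0))
    (hgφ : ∀ s : ℂ, s.im ∈ Icc (-M : ℝ) 0 → ‖g s‖ ≤ φ s.re * Real.cosh (π * s.re)) (hy : 0 < y) :
    coshMellin g y = ∑ j ∈ Finset.range M, 2 * (-1) ^ j * g (-I / 2 - j * I) * y ^ (2 * j + 1) +
      (-1) ^ M * y ^ (2 * M) * coshMellin (fun s => g (s - M * I)) y := by
  have hyC : (y : ℂ) ≠ 0 := Complex.ofReal_ne_zero.2 hy.ne'
  have hpole (j : ℕ) : (y : ℂ) ^ (2 * I * (-I / 2 - j * I)) = y ^ (2 * j + 1) := by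
    rw [← Complex.cpow_natCast]
    congr 1
    push_cast
    linear_combination (-1 - 2 * j) * Complex.I_sq
  have hbottom (u : ℝ) : (y : ℂ) ^ (2 * I * (u - M * I)) = y ^ (2 * M) * y ^ (2 * I * u) := by
    rw [← Complex.cpow_natCast, ← Complex.cpow_add _ _ hyC]
    congr 1
    push_cast
    linear_combination (-2 * M) * Complex.I_sq
  have hK (s : ℂ) (hs : s.im ∈ Icc (-M : ℝ) 0) : y ^ (-2 * s.im) ≤ max 1 y ^ (2 * M : ℝ) :=
    calc y ^ (-2 * s.im) ≤ max 1 y ^ (-2 * s.im) :=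
          Real.rpow_le_rpow hy.le (le_max_right _ _) (by linarith [hs.2])
      _ ≤ max 1 y ^ (2 * M : ℝ) :=
          Real.rpow_le_rpow_of_exponent_le (le_max_left _ _) (by linarith [hs.1])
  have hshift := integral_div_cosh_eq_sum_add_integral_sub_mul_I_div_cosh
    (f := fun s => g s * (y : ℂ) ^ (2 * I * s)) (hφ.mul_const (max 1 y ^ (2 * M : ℝ)))
    (by simpa using hφ₀.mul_const (max 1 y ^ (2 * M : ℝ))) M
    (hg.mul (by fun_prop (disch := simp [hyC]))) fun s hs => by
      rw [norm_mul, norm_ofReal_cpow_two_mul_I_mul hy, mul_right_comm]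
      have := (norm_nonneg _).trans (hgφ s hs)
      gcongr
      exacts [hgφ s hs, hK s hs]
  simp only [hpole, hbottom, mul_left_comm _ ((y : ℂ) ^ (2 * M)),
    mul_div_assoc ((y : ℂ) ^ (2 * M)), integral_const_mul] at hshift
  rw [coshMellin, hshift, coshMellin, mul_assoc ((-1 : ℂ) ^ M), mul_left_comm ((-1 : ℂ) ^ M)]
  simp only [mul_assoc (2 * _ : ℂ)]

lemma coshMellin_mem_oddTaylor (hφ : Integrable φ) (hφ₀ : Tendsto φ (cocompact ℝ) (𝓝 0)) {M : ℕ}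
    (hg : DifferentiableOn ℂ g (Complex.im ⁻¹' Icc (-M) 0))
    (hgφ : ∀ s : ℂ, s.im ∈ Icc (-M : ℝ) 0 → ‖g s‖ ≤ φ s.re * Real.cosh (π * s.re)) :
    coshMellin g ∈ oddTaylor M (𝓟 (Ioi 0)) := by
  refine ⟨fun j => 2 * (-1) ^ j * g (-I / 2 - j * I),
    isBigO_principal.2 ⟨∫ u, φ u, fun y (hy : 0 < y) => ?_⟩⟩
  rw [coshMellin_eq_sum_add hφ hφ₀ hg hgφ hy, add_sub_cancel_left, norm_mul, norm_mul, norm_pow,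
    norm_neg, norm_one, one_pow, one_mul, norm_pow, norm_pow, Complex.norm_real, mul_comm]
  gcongr
  refine norm_coshMellin_le hφ (fun u => ?_) hy
  simpa using hgφ (u - M * I) (by simp)

end CoshMellin

/-- The factor `H(s) s / Γ(m + 2is + 1)` that the `m`-th term of the power series of `J_{2is}`
contributes to the integrand of `Hplus`. -/
noncomputable def besselSymbol (H : ℂ → ℂ) (m : ℕ) (s : ℂ) : ℂ :=
  H s * s * (Complex.Gamma (m + 2 * I * s + 1))⁻¹

section BesselSymbol

variable {H : ℂ → ℂ}

lemma differentiableOn_besselSymbol {S : Set ℂ} (hH : DifferentiableOn ℂ H S) (m : ℕ) :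
    DifferentiableOn ℂ (besselSymbol H m) S := by
  have hΓ : Differentiable ℂ fun s : ℂ => (Complex.Gamma (m + 2 * I * s + 1))⁻¹ :=
    Complex.differentiable_one_div_Gamma.comp (by fun_prop)
  exact (hH.mul differentiableOn_id).mul hΓ.differentiableOn

lemma norm_besselSymbol_le (m : ℕ) {s : ℂ} {c : ℝ} (hs : s.im ≤ 0) (hH : ‖H s * s‖ ≤ c) :
    ‖besselSymbol H m s‖ ≤ 2 * √2 * c * Real.cosh (π * s.re) := by
  have hre : (m + 2 * I * s + 1).re = m - 2 * s.im + 1 := by simp; ring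
  have him : (m + 2 * I * s + 1).im = 2 * s.re := by simp
  have hΓ := norm_inv_Gamma_le (s := m + 2 * I * s + 1) (by
    rw [hre]
    linarith [m.cast_nonneg (α := ℝ)])
  rw [him, mul_left_comm] at hΓ
  calc ‖besselSymbol H m s‖ ≤ c * (2 * (√2 * Real.cosh (π * s.re))) := by
        rw [besselSymbol, norm_mul]
        gcongr
        · exact (norm_nonneg _).trans hH
        · exact hΓ.trans (by gcongr; exact sqrt_cosh_two_mul_le _)
    _ = _ := by ring

end BesselSymbol

lemma besselJ_eq_tsum {x : ℝ} (hx : 0 < x) (ν : ℂ) :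
    besselJ ν x = ∑' m : ℕ, (-1) ^ m / (m.factorial : ℂ) * ((x / 2 : ℝ) : ℂ) ^ (2 * m) *
      ((Complex.Gamma (m + ν + 1))⁻¹ * ((x / 2 : ℝ) : ℂ) ^ ν) := by
  have hx₂ : 0 < x / 2 := half_pos hx
  have hne : ((x / 2 : ℝ) : ℂ) ≠ 0 := Complex.ofReal_ne_zero.2 hx₂.ne'
  refine tsum_congr fun m => ?_
  have hpow : Complex.exp ((2 * m + ν) * Real.log (x / 2)) =
      ((x / 2 : ℝ) : ℂ) ^ (2 * m) * ((x / 2 : ℝ) : ℂ) ^ ν := by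
    rw [Complex.ofReal_log hx₂.le, mul_comm, ← Complex.cpow_def_of_ne_zero hne,
      Complex.cpow_add _ _ hne, ← Complex.cpow_natCast]
    push_cast
    rfl
  rw [hpow, div_mul_eq_div_mul_one_div]
  ring

lemma summable_norm_div_factorial_mul_pow (y : ℝ) :
    Summable fun m : ℕ => ‖((-1) ^ m / m.factorial : ℂ)‖ * y ^ (2 * m) :=
  (Real.summable_pow_div_factorial (y ^ 2)).congr fun m => by simp [pow_mul, div_eq_inv_mul]

lemma hasSum_integral_tsum_const_mul {α : Type*} [MeasurableSpace α] {μ : Measure α} {a : ℕ → ℂ}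
    {w : ℕ → α → ℂ} {ψ : α → ℝ} (ha : Summable fun m => ‖a m‖) (hψ : Integrable ψ μ)
    (hw_meas : ∀ m, AEStronglyMeasurable (w m) μ) (hw : ∀ m t, ‖w m t‖ ≤ ψ t) :
    HasSum (fun m => a m * ∫ t, w m t ∂μ) (∫ t, ∑' m, a m * w m t ∂μ) := by
  have hterm (m : ℕ) (t : α) : ‖a m * w m t‖ ≤ ‖a m‖ * ψ t := by
    rw [norm_mul]
    gcongr
    exact hw m t
  simp only [← integral_const_mul]
  exact hasSum_integral_of_dominated_convergence (fun m t => ‖a m‖ * ψ t)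
    (fun m => (hw_meas m).const_mul _) (fun m => .of_forall (hterm m))
    (.of_forall fun t => ha.mul_right _)
    (by simpa only [tsum_mul_right] using hψ.const_mul (∑' m, ‖a m‖))
    (.of_forall fun t => (Summable.of_norm_bounded (ha.mul_right _) fun m => hterm m t).hasSum)

section Hplus

variable {h : ℝ → ℝ} {H : ℂ → ℂ} {φ : ℝ → ℝ}

lemma Hplus_eq_tsum (hφ : Integrable φ) (hext : ∀ t : ℝ, H t = h t)
    (hH : Continuous fun t : ℝ => H t) (hHφ : ∀ t : ℝ, ‖H t * t‖ ≤ φ t) {x : ℝ} (hx : 0 < x) :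
    Hplus h x = 2 * I / π * ∑' m : ℕ, (-1) ^ m / (m.factorial : ℂ) *
      ((x / 2 : ℝ) : ℂ) ^ (2 * m) * coshMellin (besselSymbol H m) (x / 2) := by
  have hx₂ : 0 < x / 2 := half_pos hx
  set a : ℕ → ℂ := fun m => (-1) ^ m / (m.factorial : ℂ) * ((x / 2 : ℝ) : ℂ) ^ (2 * m) with ha_def
  set w : ℕ → ℝ → ℂ := fun m t =>
    besselSymbol H m t * ((x / 2 : ℝ) : ℂ) ^ (2 * I * t) / (Real.cosh (π * t) : ℂ) with hw_def
  have ha : Summable fun m => ‖a m‖ := by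
    simpa only [ha_def, norm_mul, norm_pow, Complex.norm_real, Real.norm_of_nonneg hx₂.le] using
      summable_norm_div_factorial_mul_pow (x / 2)
  have hsymbol (m : ℕ) : Continuous fun t : ℝ => besselSymbol H m t :=
    (hH.mul Complex.continuous_ofReal).mul
      (Complex.differentiable_one_div_Gamma.continuous.comp (by fun_prop))
  have hw (m : ℕ) (t : ℝ) : ‖w m t‖ ≤ 2 * √2 * φ t := by
    refine norm_div_cosh_le ?_
    rw [norm_mul_ofReal_cpow_two_mul_I_mul hx₂]
    exact norm_besselSymbol_le m (Complex.ofReal_im t).le (hHφ t)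
  have hswap := hasSum_integral_tsum_const_mul ha (hφ.const_mul (2 * √2))
    (fun m => aestronglyMeasurable_coshMellin_integrand (hsymbol m) hx₂) hw
  have hintegrand (t : ℝ) : (h t : ℂ) * besselJ (2 * I * t) x * (t / (Real.cosh (π * t) : ℂ)) =
      ∑' m, a m * w m t := by
    rw [besselJ_eq_tsum hx, ← hext, ← tsum_mul_left, ← tsum_mul_right]
    refine tsum_congr fun m => ?_
    simp only [ha_def, hw_def, besselSymbol]
    ring
  rw [Hplus, integral_congr_ae (.of_forall hintegrand), ← hswap.tsum_eq]
  rfl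

lemma Hplus_mem_oddTaylor {N : ℕ} (hφ : Integrable φ) (hφ₀ : Tendsto φ (cocompact ℝ) (𝓝 0))
    (hext : ∀ t : ℝ, H t = h t) (hH : DifferentiableOn ℂ H (Complex.im ⁻¹' Icc (-N) 0))
    (hHφ : ∀ s : ℂ, s.im ∈ Icc (-N : ℝ) 0 → ‖H s * s‖ ≤ φ s.re) (X : ℝ) :
    Hplus h ∈ oddTaylor N (𝓟 (Ioc 0 X)) := by
  have hsymbol (m : ℕ) (s : ℂ) (hs : s.im ∈ Icc (-N : ℝ) 0) :
      ‖besselSymbol H m s‖ ≤ 2 * √2 * φ s.re * Real.cosh (π * s.re) :=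
    norm_besselSymbol_le m hs.2 (hHφ s hs)
  have hreal (t : ℝ) : (t : ℂ).im ∈ Icc (-N : ℝ) 0 := by simp
  have hexpansion (m : ℕ) :
      coshMellin (besselSymbol H m) ∈ oddTaylor (N - m) (𝓟 (Ioc 0 (X / 2))) := by
    have hsub : Icc (-(N - m : ℕ) : ℝ) 0 ⊆ Icc (-N : ℝ) 0 :=
      Icc_subset_Icc_left (neg_le_neg (by exact_mod_cast Nat.sub_le N m))
    exact oddTaylor_mono (principal_mono.2 Ioc_subset_Ioi_self) <|
      coshMellin_mem_oddTaylor (hφ.const_mul (2 * √2)) (by simpa using hφ₀.const_mul (2 * √2))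
        (differentiableOn_besselSymbol (hH.mono fun s hs => hsub hs) m)
        fun s hs => hsymbol m s (hsub hs)
  have htsum := tsum_mem_oddTaylor (summable_norm_div_factorial_mul_pow (X / 2))
    (fun m _ => hexpansion m) fun m y hy =>
      norm_coshMellin_le (hφ.const_mul (2 * √2)) (fun u => hsymbol m u (hreal u)) hy.1
  have hhalf : Tendsto (· / 2) (𝓟 (Ioc 0 X)) (𝓟 (Ioc 0 (X / 2))) :=
    tendsto_principal_principal.2 fun x hx =>
      ⟨half_pos hx.1, div_le_div_of_nonneg_right hx.2 zero_le_two⟩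
  refine oddTaylor_congr (eventually_principal.2 fun x hx => ?_)
    ((oddTaylor N _).smul_mem (2 * I / π) (comp_div_mem_oddTaylor hhalf htsum))
  exact (Hplus_eq_tsum hφ hext (hH.continuousOn.comp_continuous Complex.continuous_ofReal hreal)
    (fun t => hHφ t (hreal t)) hx.1).symm

end Hplus

lemma tendsto_one_add_norm_rpow_neg_cocompact {r : ℝ} (hr : 0 < r) :
    Tendsto (fun u : ℝ => (1 + ‖u‖) ^ (-r)) (cocompact ℝ) (𝓝 0) :=
  (tendsto_rpow_neg_atTop hr).comp
    (tendsto_atTop_add_const_left _ 1 tendsto_norm_cocompact_atTop)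

lemma norm_mul_le_of_norm_le_rpow {s z : ℂ} {C r : ℝ} (hr : 0 ≤ r)
    (hz : ‖z‖ ≤ C * (1 + ‖s‖) ^ (-(1 + r))) : ‖z * s‖ ≤ |C| * (1 + ‖s.re‖) ^ (-r) := by
  have hs : 0 < 1 + ‖s‖ := by positivity
  calc ‖z * s‖ ≤ |C| * (1 + ‖s‖) ^ (-(1 + r)) * (1 + ‖s‖) := by
        rw [norm_mul]
        gcongr
        · exact hz.trans (by gcongr; exact le_abs_self C)
        · linarith
    _ = |C| * (1 + ‖s‖) ^ (-r) := by
        rw [mul_assoc, ← Real.rpow_add_one hs.ne', neg_add_rev, neg_add_cancel_right]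
    _ ≤ |C| * (1 + ‖s.re‖) ^ (-r) :=
        mul_le_mul_of_nonneg_left (Real.rpow_le_rpow_of_nonpos (by positivity)
          (by gcongr; exact Complex.abs_re_le_norm s) (neg_nonpos.2 hr)) (abs_nonneg C)

theorem Hplus_taylor_expansion_general {A δ : ℝ} {h : ℝ → ℝ} {H : ℂ → ℂ} (hA : 0 ≤ A) (hδ : 0 < δ)
    (extends_h : ∀ t : ℝ, H t = h t) (holo : DifferentiableOn ℂ H {s | s.im ∈ Icc (-A) 0})
    (bound : ∃ C : ℝ, ∀ s : ℂ, s.im ∈ Icc (-A) 0 → ‖H s‖ ≤ C * (1 + ‖s‖) ^ (-(2 + δ))) (X : ℝ) :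
    ∃ (α : ℕ → ℂ) (C : ℝ), (∀ m, Even m → α m = 0) ∧ ∀ x ∈ Ioc 0 X,
      ‖Hplus h x - ∑ m ∈ Finset.Icc 1 (2 * ⌊A⌋₊ - 1), α m * (x : ℂ) ^ m‖ ≤
        C * x ^ (2 * ⌊A⌋₊) := by
  obtain ⟨C, hC⟩ := bound
  have hr : 0 < 1 + δ := by linarith
  have hsub : Icc (-⌊A⌋₊ : ℝ) 0 ⊆ Icc (-A) 0 :=
    Icc_subset_Icc_left (neg_le_neg (Nat.floor_le hA))
  have hdecay : Integrable fun u : ℝ => |C| * (1 + ‖u‖) ^ (-(1 + δ)) :=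
    (integrable_one_add_norm (by simpa using hδ)).const_mul _
  have hlim : Tendsto (fun u : ℝ => |C| * (1 + ‖u‖) ^ (-(1 + δ))) (cocompact ℝ) (𝓝 0) := by
    simpa using (tendsto_one_add_norm_rpow_neg_cocompact hr).const_mul |C|
  have hHs (s : ℂ) (hs : s.im ∈ Icc (-⌊A⌋₊ : ℝ) 0) :
      ‖H s * s‖ ≤ |C| * (1 + ‖s.re‖) ^ (-(1 + δ)) :=
    norm_mul_le_of_norm_le_rpow hr.le <|
      (hC s (hsub hs)).trans_eq <| by rw [← add_assoc, one_add_one_eq_two]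
  obtain ⟨c, hc⟩ := Hplus_mem_oddTaylor hdecay hlim extends_h
    (holo.mono fun s hs => hsub hs) hHs X
  obtain ⟨α, hα_even, hα⟩ := exists_sum_Icc_eq_sum_odd c ⌊A⌋₊
  obtain ⟨K, hK⟩ := isBigO_principal.1 hc
  exact ⟨α, K, hα_even, fun x hx => by simpa [hα, abs_of_pos hx.1] using hK x hx⟩

end

/-- For `h ∈ 𝓗(A,δ)` with `A > 13`, `H⁺` has a Taylor-type expansion
`H⁺(x) = ∑_{m=1}^{2⌊A⌋-1} α_m x^m + O_A(x^{2⌊A⌋})` on `(0, 4π)`. -/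
theorem Hplus_taylor_expansion (A δ : ℝ) (hA : 13 < A) (hδ : 0 < δ) (h : ℝ → ℝ) (H : ℂ → ℂ)
    (hh : IsInHClass A δ h H) :
    ∃ (α : ℕ → ℂ) (C : ℝ), ∀ x ∈ Set.Ioo (0 : ℝ) (4 * π),
      ‖Hplus h x - ∑ m ∈ Finset.Icc 1 (2 * ⌊A⌋₊ - 1), α m * (x : ℂ) ^ m‖
        ≤ C * x ^ (2 * ⌊A⌋₊) := by
  have habs (s : ℂ) (hs : s.im ∈ Set.Icc (-A) 0) : |s.im| ≤ A :=
    abs_le.2 ⟨hs.1, hs.2.trans (by linarith)⟩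
  obtain ⟨α, C, -, hC⟩ := Hplus_taylor_expansion_general (by linarith : 0 ≤ A) hδ hh.extends_h
    (hh.holo.mono habs) (hh.bound.imp fun _ hK s hs => hK s (habs s hs)) (4 * π)
  exact ⟨α, C, fun x hx => hC x (Set.Ioo_subset_Ioc_self hx)⟩
end

section
/- Let σ ∈ (0,2) be fixed, let N be a prime, let c ≥ N be a real number, let φ be an even Schwartz function with supp(φ̂) ⊂ (−σ,σ), and let H : (0,4π) → ℂ be twice continuously differentiable with |H(x)| ≤ C₀·x, |H′(x)| ≤ C₀ and |H″(x)| ≤ C₀ for all x ∈ (0,4π) and some constant C₀ ≥ 0. Then the function Ψ(s) := (1/log N) ∫_0^∞ x^{s−1} φ̂(log x/log N) H(4π√x/c) dx (whose integrand is supported in N^{−σ} < x < N^{σ}, where 4π√x/c ∈ (0,4π)) is an entire function of s, and there is a constant C depending only on σ, φ and C₀ such that |Ψ(s)| ≤ C · N^{σ|Re(s)+1/2|}/((|s|+1)²·c) for all s ∈ ℂ. -/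
open MeasureTheory Real Complex

/-- The Fourier transform `φ̂(ξ) = ∫_ℝ φ(x) e^{-2πixξ} dx` of a real-valued function. -/
noncomputable def fourierHat (φ : ℝ → ℝ) (ξ : ℝ) : ℂ :=
  ∫ x : ℝ, (φ x : ℂ) * Complex.exp (-2 * π * Complex.I * x * ξ)

/-- The Mellin-type transform `Ψ(s) = (1/log N) ∫_0^∞ x^{s-1} φ̂(log x / log N) H(4π√x/c) dx`. -/
noncomputable def PsiTransform (φ : ℝ → ℝ) (N : ℕ) (c : ℝ) (H : ℝ → ℂ) (s : ℂ) : ℂ :=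
  (1 / (Real.log N : ℂ)) * ∫ x in Set.Ioi (0 : ℝ),
    (x : ℂ) ^ (s - 1) * fourierHat φ (Real.log x / Real.log N) * H (4 * π * Real.sqrt x / c)

/-!
In the variable `u = log x`, `log N * Ψ(s)` is the two-sided Laplace transform `∫ e^{su} F(u) du` of
`F(u) = φ̂(u / log N) H(4π e^{u/2} / c)`. Since `φ̂` vanishes outside `[-σ, σ]`, `F` is supported in
`|u| ≤ σ log N`, where the argument of `H` stays inside `(0, 4π)`; so `F` is `C²` with compact
support although nothing is known of `H` off `(0, 4π)`, and the transform is entire.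
There `|H(y)| ≤ C₀ y` makes `F` of size `e^{u/2} / c`, and so are its derivatives, because each
derivative of `H(4π e^{u/2} / c)` in `u` brings out a factor `4π e^{u/2} / c`. Integrating by parts
twice gains `s^{-2}`, the exponential `e^{(Re s + 1/2)u}` is at most `N^{σ|Re s + 1/2|}`, and the
length `2σ log N` of the support absorbs the factor `1 / log N`.
-/

open Set Filter Topology
open scoped FourierTransform

section Calculus

lemma norm_iteratedDeriv_fun_mul_le {𝕜 𝔸 : Type*} [NontriviallyNormedField 𝕜] [NormedRing 𝔸]
    [NormedAlgebra 𝕜 𝔸] {f g : 𝕜 → 𝔸} {x : 𝕜} {n : ℕ} {A B : ℝ}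
    (hf : ContDiffAt 𝕜 n f x) (hg : ContDiffAt 𝕜 n g x)
    (hA : ∀ i ≤ n, ‖iteratedDeriv i f x‖ ≤ A) (hB : ∀ i ≤ n, ‖iteratedDeriv i g x‖ ≤ B) :
    ‖iteratedDeriv n (fun y => f y * g y) x‖ ≤ 2 ^ n * (A * B) := by
  have hA0 : 0 ≤ A := (norm_nonneg _).trans (hA 0 n.zero_le)
  rw [iteratedDeriv_fun_mul hf hg, ← Nat.cast_ofNat (R := ℝ), ← Nat.cast_pow,
    ← Nat.sum_range_choose, Nat.cast_sum, Finset.sum_mul]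
  refine norm_sum_le_of_le _ fun i hi => ?_
  have hin : i ≤ n := Nat.lt_succ_iff.mp (Finset.mem_range.mp hi)
  rw [mul_assoc, ← nsmul_eq_mul]
  refine norm_nsmul_le.trans ?_
  gcongr
  exact (norm_mul_le _ _).trans
    (mul_le_mul (hA i hin) (hB _ (n.sub_le i)) (norm_nonneg _) hA0)

lemma support_iteratedDeriv_subset {𝕜 E : Type*} [NontriviallyNormedField 𝕜]
    [NormedAddCommGroup E] [NormedSpace 𝕜 E] (f : 𝕜 → E) (n : ℕ) :
    Function.support (iteratedDeriv n f) ⊆ tsupport f := by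
  intro x hx
  refine support_iteratedFDeriv_subset (𝕜 := 𝕜) n fun h => hx ?_
  rw [iteratedDeriv_eq_iteratedFDeriv, h, zero_apply]

lemma exists_norm_iteratedDeriv_le_of_hasCompactSupport {E : Type*} [NormedAddCommGroup E]
    [NormedSpace ℝ E] {f : ℝ → E} {n : ℕ} (hf : ContDiff ℝ n f) (hc : HasCompactSupport f) :
    ∃ M, ∀ i ≤ n, ∀ x, ‖iteratedDeriv i f x‖ ≤ M := by
  have hbdd (i : ℕ) (hi : i ≤ n) : ∃ M, ∀ x, ‖iteratedDeriv i f x‖ ≤ M := by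
    obtain ⟨M, hM⟩ := (hc.iteratedFDeriv (𝕜 := ℝ) i).exists_bound_of_continuous
      (hf.continuous_iteratedFDeriv (mod_cast hi))
    exact ⟨M, fun x => norm_iteratedFDeriv_eq_norm_iteratedDeriv.symm.trans_le (hM x)⟩
  choose! M hM using hbdd
  refine ⟨∑ i ∈ Finset.range (n + 1), |M i|, fun i hi x => (hM i hi x).trans ?_⟩
  exact (le_abs_self _).trans (Finset.single_le_sum (f := fun j => |M j|)
    (fun j _ => abs_nonneg _) (Finset.mem_range_succ_iff.mpr hi))

end Calculus

section Mellin

variable {E : Type*} [NormedAddCommGroup E] [NormedSpace ℂ E] {F : ℝ → E}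

lemma mellin_comp_log (F : ℝ → E) (s : ℂ) :
    mellin (fun x => F (Real.log x)) s = ∫ u : ℝ, cexp (s * u) • F u := by
  rw [mellin, ← Real.range_exp, ← image_univ, integral_image_eq_integral_abs_deriv_smul
    MeasurableSet.univ (fun x _ => (Real.hasDerivAt_exp x).hasDerivWithinAt)
    Real.exp_injective.injOn, setIntegral_univ]
  refine integral_congr_ae (Eventually.of_forall fun u => ?_)
  have hcpow : (Real.exp u : ℂ) * (Real.exp u : ℂ) ^ (s - 1) = cexp (s * u) := by
    have hne : (Real.exp u : ℂ) ≠ 0 := mod_cast (Real.exp_pos u).ne'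
    rw [Complex.cpow_sub _ _ hne, Complex.cpow_one, mul_div_cancel₀ _ hne,
      Complex.cpow_def_of_ne_zero hne, ← Complex.ofReal_log (Real.exp_pos u).le, Real.log_exp,
      mul_comm]
  simp only [abs_of_pos (Real.exp_pos u), Real.log_exp, ← hcpow, mul_smul, Complex.coe_smul]

lemma differentiable_mellin_comp_log (hF : Continuous F) (hc : HasCompactSupport F) :
    Differentiable ℂ (mellin fun x => F (Real.log x)) := by
  have hloc : LocallyIntegrableOn (fun x => F (Real.log x)) (Ioi 0) :=
    (hF.comp_continuousOn (Real.continuousOn_log.mono fun _ hx => ne_of_gt hx)).locallyIntegrableOn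
      measurableSet_Ioi
  have hF0 : F =ᶠ[cocompact ℝ] 0 := by
    rwa [hasCompactSupport_iff_eventuallyEq, coclosedCompact_eq_cocompact] at hc
  have htop : (fun x => F (Real.log x)) =ᶠ[atTop] 0 :=
    (Real.tendsto_log_atTop.mono_right atTop_le_cocompact).eventually hF0
  have hbot : (fun x => F (Real.log x)) =ᶠ[𝓝[>] 0] 0 :=
    (Real.tendsto_log_nhdsGT_zero.mono_right atBot_le_cocompact).eventually hF0
  intro s
  exact mellin_differentiableAt_of_isBigO_rpow hloc
    (htop.trans_isBigO (Asymptotics.isBigO_zero _ _)) (lt_add_one s.re)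
    (hbot.trans_isBigO (Asymptotics.isBigO_zero _ _)) (sub_one_lt s.re)

lemma mellin_deriv_comp_log (hF : ContDiff ℝ 1 F) (hc : HasCompactSupport F) (s : ℂ) :
    mellin (fun x => deriv F (Real.log x)) s = -s • mellin (fun x => F (Real.log x)) s := by
  have hexp (u : ℝ) : HasDerivAt (fun u : ℝ => cexp (s * u)) (s * cexp (s * u)) u := by
    simpa [mul_comm] using ((Complex.ofRealCLM.hasDerivAt (x := u)).const_mul s).cexp
  have hint {G : ℝ → E} (hG : Continuous G) (hGc : HasCompactSupport G) (a : ℂ) :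
      Integrable fun u : ℝ => (a * cexp (s * u)) • G u :=
    Continuous.integrable_of_hasCompactSupport (by fun_prop) hGc.smul_left
  have hF' : Continuous (deriv F) := hF.continuous_deriv le_rfl
  have hparts := integral_bilinear_hasDerivAt_right_eq_neg_left_of_integrable
    (L := ContinuousLinearMap.lsmul ℝ ℂ) (fun u _ => hexp u)
    (fun u _ => (hF.differentiable one_ne_zero u).hasDerivAt)
    (by simpa using hint hF' hc.deriv 1) (hint hF.continuous hc s)
    (by simpa using hint hF.continuous hc 1)
  simp only [ContinuousLinearMap.lsmul_apply, mul_smul, integral_smul] at hparts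
  rw [mellin_comp_log, mellin_comp_log, hparts, neg_smul]

lemma mellin_iteratedDeriv_comp_log {n : ℕ} (hF : ContDiff ℝ n F) (hc : HasCompactSupport F)
    (s : ℂ) : mellin (fun x => iteratedDeriv n F (Real.log x)) s =
      (-s) ^ n • mellin (fun x => F (Real.log x)) s := by
  induction n generalizing F with
  | zero => simp
  | succ n ih =>
    have hF1 : ContDiff ℝ 1 F := hF.of_le (by norm_cast; lia)
    have hF' : ContDiff ℝ n (deriv F) := (contDiff_succ_iff_deriv.mp (mod_cast hF)).2.2
    rw [iteratedDeriv_succ', ih hF' hc.deriv, mellin_deriv_comp_log hF1 hc, smul_smul, pow_succ]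

lemma norm_mellin_comp_log_le {R a K : ℝ} (hR : 0 ≤ R) (hsupp : Function.support F ⊆ Icc (-R) R)
    (hF : ∀ u ∈ Icc (-R) R, ‖F u‖ ≤ K * Real.exp (a * u)) (s : ℂ) :
    ‖mellin (fun x => F (Real.log x)) s‖ ≤ 2 * R * K * Real.exp (R * |s.re + a|) := by
  have hK : 0 ≤ K := by simpa using (norm_nonneg _).trans (hF 0 (by simpa using hR))
  have hpt (u : ℝ) (hu : u ∈ Icc (-R) R) :
      ‖cexp (s * u) • F u‖ ≤ K * Real.exp (R * |s.re + a|) :=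
    calc ‖cexp (s * u) • F u‖
        ≤ Real.exp (s.re * u) * (K * Real.exp (a * u)) := by
          rw [norm_smul, Complex.norm_exp, Complex.re_mul_ofReal]
          gcongr
          exact hF u hu
      _ = K * Real.exp (u * (s.re + a)) := by
          rw [mul_left_comm, ← Real.exp_add]; ring_nf
      _ ≤ K * Real.exp (R * |s.re + a|) := by
          have habs : |u| ≤ R := abs_le.mpr hu
          have hexponent : u * (s.re + a) ≤ R * |s.re + a| :=
            (le_abs_self _).trans ((abs_mul _ _).trans_le (by gcongr))
          gcongr
  have hzero (u : ℝ) (hu : u ∉ Icc (-R) R) : cexp (s * u) • F u = 0 := by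
    rw [Function.notMem_support.mp (notMem_subset hsupp hu), smul_zero]
  rw [mellin_comp_log, ← setIntegral_eq_integral_of_forall_compl_eq_zero hzero]
  calc _ ≤ K * Real.exp (R * |s.re + a|) * volume.real (Icc (-R) R) :=
        norm_setIntegral_le_of_norm_le_const measure_Icc_lt_top hpt
    _ = 2 * R * K * Real.exp (R * |s.re + a|) := by
        rw [Real.volume_real_Icc_of_le (by linarith)]; ring

lemma norm_mellin_comp_log_le_div_pow {n : ℕ} {R a K : ℝ} (hR : 0 ≤ R) (hF : ContDiff ℝ n F)
    (hsupp : tsupport F ⊆ Icc (-R) R)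
    (h₀ : ∀ u ∈ Icc (-R) R, ‖F u‖ ≤ K * Real.exp (a * u))
    (hₙ : ∀ u ∈ Icc (-R) R, ‖iteratedDeriv n F u‖ ≤ K * Real.exp (a * u)) (s : ℂ) :
    ‖mellin (fun x => F (Real.log x)) s‖ ≤
      2 ^ (n - 1) * (4 * R * K * Real.exp (R * |s.re + a|)) / (‖s‖ + 1) ^ n := by
  set P := ‖mellin (fun x => F (Real.log x)) s‖
  have hc : HasCompactSupport F := isCompact_Icc.of_isClosed_subset (isClosed_tsupport F) hsupp
  have hP : P ≤ 2 * R * K * Real.exp (R * |s.re + a|) :=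
    norm_mellin_comp_log_le hR ((subset_tsupport F).trans hsupp) h₀ s
  have hPn : ‖s‖ ^ n * P ≤ 2 * R * K * Real.exp (R * |s.re + a|) := by
    have h := norm_mellin_comp_log_le hR
      ((support_iteratedDeriv_subset F n).trans hsupp) hₙ s
    rwa [mellin_iteratedDeriv_comp_log hF hc, norm_smul, norm_pow, norm_neg] at h
  rw [le_div_iff₀ (by positivity)]
  calc P * (‖s‖ + 1) ^ n ≤ P * (2 ^ (n - 1) * (‖s‖ ^ n + 1 ^ n)) := by
        gcongr
        exact add_pow_le (norm_nonneg s) zero_le_one n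
    _ = 2 ^ (n - 1) * (‖s‖ ^ n * P + P) := by rw [one_pow]; ring
    _ ≤ 2 ^ (n - 1) * (4 * R * K * Real.exp (R * |s.re + a|)) := by
        gcongr
        linarith

end Mellin

section CompExp

variable {E : Type*} [NormedAddCommGroup E] [NormedSpace ℝ E] {H : ℝ → E} {a κ u : ℝ}

lemma hasDerivAt_const_mul_exp (a κ u : ℝ) :
    HasDerivAt (fun v => κ * Real.exp (a * v)) (a * (κ * Real.exp (a * u))) u := by
  convert! ((hasDerivAt_id u).const_mul a).exp.const_mul κ using 1
  simp only [id]; ring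

lemma hasDerivAt_comp_const_mul_exp (hH : DifferentiableAt ℝ H (κ * Real.exp (a * u))) :
    HasDerivAt (fun v => H (κ * Real.exp (a * v)))
      ((a * (κ * Real.exp (a * u))) • deriv H (κ * Real.exp (a * u))) u :=
  hH.hasDerivAt.scomp u (hasDerivAt_const_mul_exp a κ u)

lemma iteratedDeriv_two_comp_const_mul_exp (hH : ContDiffAt ℝ 2 H (κ * Real.exp (a * u))) :
    iteratedDeriv 2 (fun v => H (κ * Real.exp (a * v))) u =
      (a * (κ * Real.exp (a * u))) ^ 2 • deriv (deriv H) (κ * Real.exp (a * u)) +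
        (a ^ 2 * (κ * Real.exp (a * u))) • deriv H (κ * Real.exp (a * u)) := by
  have hcont : ContinuousAt (fun v => κ * Real.exp (a * v)) u := by fun_prop
  have hderiv : deriv (fun v => H (κ * Real.exp (a * v))) =ᶠ[𝓝 u]
      fun v => (a * (κ * Real.exp (a * v))) • deriv H (κ * Real.exp (a * v)) := by
    filter_upwards [hcont.eventually (hH.eventually (by simp))] with v hv
    exact (hasDerivAt_comp_const_mul_exp (hv.differentiableAt two_ne_zero)).deriv
  have hH' : DifferentiableAt ℝ (deriv H) (κ * Real.exp (a * u)) :=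
    ((hH.fderiv_right (m := 1) (by norm_num)).differentiableAt one_ne_zero).clm_apply
      (differentiableAt_const 1)
  rw [iteratedDeriv_succ, iteratedDeriv_one, hderiv.deriv_eq]
  refine (((hasDerivAt_const_mul_exp a κ u).const_mul a).fun_smul
    (hasDerivAt_comp_const_mul_exp hH')).deriv.trans ?_
  module

lemma norm_iteratedDeriv_comp_const_mul_exp_le {b C : ℝ} (ha : |a| ≤ 1)
    (hy : κ * Real.exp (a * u) ∈ Icc 0 b) (hH : ContDiffAt ℝ 2 H (κ * Real.exp (a * u)))
    (h₀ : ‖H (κ * Real.exp (a * u))‖ ≤ C * (κ * Real.exp (a * u)))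
    (h₁ : ‖deriv H (κ * Real.exp (a * u))‖ ≤ C)
    (h₂ : ‖deriv (deriv H) (κ * Real.exp (a * u))‖ ≤ C) {i : ℕ} (hi : i ≤ 2) :
    ‖iteratedDeriv i (fun v => H (κ * Real.exp (a * v))) u‖ ≤
      (b + 1) * C * (κ * Real.exp (a * u)) := by
  have hd₁ := (hasDerivAt_comp_const_mul_exp (hH.differentiableAt two_ne_zero)).deriv
  have hd₂ := iteratedDeriv_two_comp_const_mul_exp hH
  set y := κ * Real.exp (a * u)
  obtain ⟨hy0, hyb⟩ := hy
  have hC : 0 ≤ C := (norm_nonneg _).trans h₁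
  have hCy : 0 ≤ C * y := mul_nonneg hC hy0
  have hbCy : C * y ≤ (b + 1) * C * y := by
    rw [mul_assoc]; exact le_mul_of_one_le_left hCy (by linarith)
  interval_cases i
  · simpa only [iteratedDeriv_zero] using h₀.trans hbCy
  · rw [iteratedDeriv_one, hd₁]
    calc ‖(a * y) • deriv H y‖ = |a| * y * ‖deriv H y‖ := by
          rw [norm_smul, Real.norm_eq_abs, abs_mul, abs_of_nonneg hy0]
      _ ≤ 1 * y * C := by gcongr
      _ ≤ (b + 1) * C * y := by linarith
  · rw [hd₂]
    calc ‖(a * y) ^ 2 • deriv (deriv H) y + (a ^ 2 * y) • deriv H y‖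
        ≤ |a| ^ 2 * y ^ 2 * ‖deriv (deriv H) y‖ + |a| ^ 2 * y * ‖deriv H y‖ := by
          refine (norm_add_le _ _).trans_eq ?_
          simp only [norm_smul, Real.norm_eq_abs, abs_mul, abs_pow, abs_of_nonneg hy0, mul_pow]
      _ ≤ 1 ^ 2 * y ^ 2 * C + 1 ^ 2 * y * C := by gcongr
      _ = (y + 1) * C * y := by ring
      _ ≤ (b + 1) * C * y := by gcongr

end CompExp

section Amplitude

/-- The function of `u = log x` whose transform `∫ cexp (s * u) * · du` is `log N * Ψ(s)`, with `w`
in place of `φ̂` and `L` in place of `log N`; `4 * π / c * exp (1 / 2 * u)` is `4π√x/c`. -/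
noncomputable def psiAmplitude (w : ℝ → ℂ) (L c : ℝ) (H : ℝ → ℂ) (u : ℝ) : ℂ :=
  w (L⁻¹ * u) * H (4 * π / c * Real.exp (1 / 2 * u))

lemma PsiTransform_eq_mellin (φ : ℝ → ℝ) (N : ℕ) (c : ℝ) (H : ℝ → ℂ) (s : ℂ) :
    PsiTransform φ N c H s = (1 / (Real.log N : ℂ)) *
      mellin (fun x => psiAmplitude (fourierHat φ) (Real.log N) c H (Real.log x)) s := by
  rw [PsiTransform, mellin]
  congr 1
  refine setIntegral_congr_fun measurableSet_Ioi fun x hx => ?_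
  have hsqrt : √x = Real.exp (1 / 2 * Real.log x) := by
    rw [Real.sqrt_eq_rpow, Real.rpow_def_of_pos hx, mul_comm]
  simp only [psiAmplitude, hsqrt, smul_eq_mul, mul_assoc, div_eq_inv_mul,
    mul_left_comm]

variable {w H : ℝ → ℂ} {σ L c : ℝ}

lemma tsupport_psiAmplitude_subset (hL : 0 < L) (hw : Function.support w ⊆ Icc (-σ) σ) :
    tsupport (psiAmplitude w L c H) ⊆ Icc (-(L * σ)) (L * σ) := by
  refine closure_minimal (fun u hu => ?_) isClosed_Icc
  obtain ⟨h₁, h₂⟩ := hw (left_ne_zero_of_mul hu : w (L⁻¹ * u) ≠ 0)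
  rw [← div_eq_inv_mul] at h₁ h₂
  exact ⟨by rw [le_div_iff₀' hL] at h₁; linarith, (div_le_iff₀' hL).mp h₂⟩

lemma const_mul_exp_half_mem_Ioo (hc : Real.exp (1 / 2 * (L * σ)) < c)
    {u : ℝ} (hu : u ∈ Icc (-(L * σ)) (L * σ)) :
    4 * π / c * Real.exp (1 / 2 * u) ∈ Ioo 0 (4 * π) := by
  have hc0 : 0 < c := (Real.exp_pos _).trans hc
  have hlt : Real.exp (1 / 2 * u) < c := (Real.exp_le_exp.mpr (by linarith [hu.2])).trans_lt hc
  refine ⟨by positivity, ?_⟩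
  rw [div_mul_eq_mul_div, div_lt_iff₀ hc0]
  gcongr

lemma contDiff_psiAmplitude {n : ℕ} (hL : 0 < L) (hc : Real.exp (1 / 2 * (L * σ)) < c)
    (hw : ContDiff ℝ n w) (hsupp : Function.support w ⊆ Icc (-σ) σ)
    (hH : ContDiffOn ℝ n H (Ioo 0 (4 * π))) : ContDiff ℝ n (psiAmplitude w L c H) := by
  rw [← contMDiff_iff_contDiff]
  refine contMDiff_of_tsupport fun u hu => ContDiffAt.contMDiffAt ?_
  have hy := const_mul_exp_half_mem_Ioo hc (tsupport_psiAmplitude_subset hL hsupp hu)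
  exact (hw.comp (by fun_prop)).contDiffAt.mul <|
    ContDiffAt.comp u (hH.contDiffAt (isOpen_Ioo.mem_nhds hy)) (by fun_prop)

-- `4 * M` bounds the derivatives of `w (L⁻¹ * ·)`, as `L⁻¹ ≤ 2`; the factor `(4 * π + 1) * C₀`
-- bounds those of `H`; the outer `4 = 2 ^ 2` is the sum of the Leibniz coefficients.
lemma norm_iteratedDeriv_psiAmplitude_le {M C₀ u : ℝ} (hL : 1 / 2 ≤ L) (hw : ContDiff ℝ 2 w)
    (hM : ∀ i ≤ 2, ∀ x, ‖iteratedDeriv i w x‖ ≤ M)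
    (hy : 4 * π / c * Real.exp (1 / 2 * u) ∈ Ioo 0 (4 * π))
    (hH : ContDiffOn ℝ 2 H (Ioo 0 (4 * π))) (h₀ : ∀ x ∈ Ioo 0 (4 * π), ‖H x‖ ≤ C₀ * x)
    (h₁ : ∀ x ∈ Ioo 0 (4 * π), ‖deriv H x‖ ≤ C₀)
    (h₂ : ∀ x ∈ Ioo 0 (4 * π), ‖deriv (deriv H) x‖ ≤ C₀) {n : ℕ} (hn : n ≤ 2) :
    ‖iteratedDeriv n (psiAmplitude w L c H) u‖ ≤
      4 * (4 * M * ((4 * π + 1) * C₀ * (4 * π / c))) * Real.exp (1 / 2 * u) := by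
  have hn' : (n : WithTop ℕ∞) ≤ 2 := mod_cast hn
  have hHy := hH.contDiffAt (isOpen_Ioo.mem_nhds hy)
  have hM0 : 0 ≤ M := (norm_nonneg _).trans (hM 0 zero_le_two 0)
  have hwL (i : ℕ) (hi : i ≤ n) : ‖iteratedDeriv i (fun v => w (L⁻¹ * v)) u‖ ≤ 4 * M := by
    have hi2 : i ≤ 2 := hi.trans hn
    have hLi : (L⁻¹) ^ i ≤ 4 :=
      calc (L⁻¹) ^ i ≤ 2 ^ i := by
            gcongr
            exact inv_le_of_inv_le₀ two_pos (by linarith)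
        _ ≤ 2 ^ 2 := by gcongr; norm_num
        _ = 4 := by norm_num
    have hL0 : 0 ≤ L⁻¹ := by positivity
    rw [iteratedDeriv_comp_const_smul (hw.of_le (mod_cast hi2)), norm_smul, norm_pow,
      Real.norm_of_nonneg hL0]
    exact mul_le_mul hLi (hM i hi2 _) (norm_nonneg _) zero_le_four
  have hHexp (i : ℕ) (hi : i ≤ n) :=
    norm_iteratedDeriv_comp_const_mul_exp_le (a := 1 / 2) (by norm_num [abs_le])
      (Ioo_subset_Icc_self hy) hHy (h₀ _ hy) (h₁ _ hy) (h₂ _ hy) (hi.trans hn)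
  calc ‖iteratedDeriv n (psiAmplitude w L c H) u‖
      ≤ 2 ^ n * (4 * M * ((4 * π + 1) * C₀ * (4 * π / c * Real.exp (1 / 2 * u)))) :=
        norm_iteratedDeriv_fun_mul_le ((hw.comp (by fun_prop)).contDiffAt.of_le hn')
          ((ContDiffAt.comp u hHy (by fun_prop)).of_le hn') hwL hHexp
    _ ≤ 2 ^ 2 * (4 * M * ((4 * π + 1) * C₀ * (4 * π / c * Real.exp (1 / 2 * u)))) := by
        gcongr
        · exact mul_nonneg (by positivity) ((norm_nonneg _).trans (hHexp 0 n.zero_le))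
        · exact one_le_two
    _ = _ := by ring

lemma norm_mellin_psiAmplitude_le {M C₀ : ℝ} (hσ : 0 ≤ σ) (hL : 1 / 2 ≤ L)
    (hc : Real.exp (1 / 2 * (L * σ)) < c) (hw : ContDiff ℝ 2 w)
    (hsupp : Function.support w ⊆ Icc (-σ) σ) (hM : ∀ i ≤ 2, ∀ x, ‖iteratedDeriv i w x‖ ≤ M)
    (hH : ContDiffOn ℝ 2 H (Ioo 0 (4 * π))) (h₀ : ∀ x ∈ Ioo 0 (4 * π), ‖H x‖ ≤ C₀ * x)
    (h₁ : ∀ x ∈ Ioo 0 (4 * π), ‖deriv H x‖ ≤ C₀)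
    (h₂ : ∀ x ∈ Ioo 0 (4 * π), ‖deriv (deriv H) x‖ ≤ C₀) (s : ℂ) :
    ‖mellin (fun x => psiAmplitude w L c H (Real.log x)) s‖ ≤
      L * (512 * π * (4 * π + 1) * σ * M * C₀ * Real.exp (L * (σ * |s.re + 1 / 2|)) /
        ((‖s‖ + 1) ^ 2 * c)) := by
  have hL0 : 0 < L := one_half_pos.trans_le hL
  have hbound (n : ℕ) (hn : n ≤ 2) (u : ℝ) (hu : u ∈ Icc (-(L * σ)) (L * σ)) :=
    norm_iteratedDeriv_psiAmplitude_le hL hw hM (const_mul_exp_half_mem_Ioo hc hu)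
      hH h₀ h₁ h₂ hn
  refine (norm_mellin_comp_log_le_div_pow (n := 2) (by positivity)
    (contDiff_psiAmplitude hL0 hc hw hsupp hH) (tsupport_psiAmplitude_subset hL0 hsupp)
    (hbound 0 zero_le_two) (hbound 2 le_rfl) s).trans_eq ?_
  rw [mul_assoc L σ]
  field_simp
  ring

end Amplitude

section FourierHat

lemma integrable_pow_mul_schwartzMap (φ : SchwartzMap ℝ ℝ) (k : ℕ) :
    Integrable fun x => x ^ k * φ x :=
  (φ.integrable_pow_mul volume k).mono (by fun_prop) (by simp)

lemma fourierHat_eq_fourier (φ : ℝ → ℝ) : fourierHat φ = 𝓕 (fun x => (φ x : ℂ)) := by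
  ext ξ
  rw [fourierHat, Real.fourier_eq']
  congr 1; ext x
  simp only [RCLike.inner_apply, conj_trivial, smul_eq_mul]
  push_cast
  ring_nf

lemma contDiff_fourierHat {φ : ℝ → ℝ} {n : ℕ}
    (hφ : ∀ k ≤ n, Integrable fun x => x ^ k * φ x) : ContDiff ℝ n (fourierHat φ) := by
  rw [fourierHat_eq_fourier]
  refine Real.contDiff_fourier (N := n) fun k hk => ?_
  simpa using (hφ k (mod_cast hk)).norm

end FourierHat

theorem PsiTransform_entire_and_bounded_general {σ : ℝ} (hσ : 0 ≤ σ) {φ : ℝ → ℝ}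
    (hφ : ∀ k ≤ 2, Integrable fun x => x ^ k * φ x)
    (hsupp : Function.support (fourierHat φ) ⊆ Icc (-σ) σ) (C₀ : ℝ) :
    ∃ C : ℝ, ∀ N : ℕ, 2 ≤ N → ∀ c : ℝ, (N : ℝ) ^ (σ / 2) < c → ∀ H : ℝ → ℂ,
      ContDiffOn ℝ 2 H (Ioo 0 (4 * π)) →
      (∀ x ∈ Ioo 0 (4 * π), ‖H x‖ ≤ C₀ * x) →
      (∀ x ∈ Ioo 0 (4 * π), ‖deriv H x‖ ≤ C₀) →
      (∀ x ∈ Ioo 0 (4 * π), ‖deriv (deriv H) x‖ ≤ C₀) →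
      Differentiable ℂ (PsiTransform φ N c H) ∧
      ∀ s : ℂ, ‖PsiTransform φ N c H s‖
        ≤ C * (N : ℝ) ^ (σ * |s.re + 1 / 2|) / ((‖s‖ + 1) ^ 2 * c) := by
  have hw : ContDiff ℝ 2 (fourierHat φ) := contDiff_fourierHat hφ
  obtain ⟨M, hM⟩ := exists_norm_iteratedDeriv_le_of_hasCompactSupport hw
    (HasCompactSupport.of_support_subset_isCompact isCompact_Icc hsupp)
  refine ⟨512 * π * (4 * π + 1) * σ * M * C₀, fun N hN c hc H hH h₀ h₁ h₂ => ?_⟩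
  have hN0 : (0 : ℝ) < N := by positivity
  have hL : 1 / 2 ≤ Real.log N :=
    (by linarith [Real.log_two_gt_d9] : 1 / 2 ≤ Real.log 2).trans <|
      Real.log_le_log two_pos (mod_cast hN)
  have hL0 : 0 < Real.log N := one_half_pos.trans_le hL
  have hc' : Real.exp (1 / 2 * (Real.log N * σ)) < c := by
    rw [Real.rpow_def_of_pos hN0] at hc
    convert! hc using 2
    ring
  rw [funext (PsiTransform_eq_mellin φ N c H)]
  refine ⟨(differentiable_mellin_comp_log
    (contDiff_psiAmplitude (n := 2) hL0 hc' hw hsupp hH).continuous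
    (isCompact_Icc.of_isClosed_subset (isClosed_tsupport _)
      (tsupport_psiAmplitude_subset hL0 hsupp))).const_mul _, fun s => ?_⟩
  rw [norm_mul, norm_div, norm_one, Complex.norm_real, Real.norm_of_nonneg hL0.le,
    one_div_mul_eq_div, div_le_iff₀' hL0, Real.rpow_def_of_pos hN0]
  exact norm_mellin_psiAmplitude_le hσ hL hc' hw hsupp hM hH h₀ h₁ h₂ s

/-- For `φ` an even Schwartz function with `supp φ̂ ⊂ (-σ, σ)` and `H` twice continuously
differentiable on `(0, 4π)` with `|H(x)| ≤ C₀ x`, `|H'(x)| ≤ C₀`, `|H''(x)| ≤ C₀` there,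
the transform `Ψ` is entire and `|Ψ(s)| ≤ C N^{σ|Re s + 1/2|} / ((|s|+1)² c)`, with `C`
depending only on `σ`, `φ` and `C₀`. -/
theorem PsiTransform_entire_and_bounded (σ : ℝ) (hσ0 : 0 < σ) (hσ2 : σ < 2)
    (φ : SchwartzMap ℝ ℝ) (heven : ∀ x : ℝ, φ (-x) = φ x)
    (hsupp : Function.support (fourierHat (fun x => φ x)) ⊆ Set.Ioo (-σ) σ)
    (C₀ : ℝ) (hC₀ : 0 ≤ C₀) :
    ∃ C : ℝ, ∀ N : ℕ, N.Prime → ∀ c : ℝ, (N : ℝ) ≤ c → ∀ H : ℝ → ℂ,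
      ContDiffOn ℝ 2 H (Set.Ioo 0 (4 * π)) →
      (∀ x ∈ Set.Ioo (0 : ℝ) (4 * π), ‖H x‖ ≤ C₀ * x) →
      (∀ x ∈ Set.Ioo (0 : ℝ) (4 * π), ‖deriv H x‖ ≤ C₀) →
      (∀ x ∈ Set.Ioo (0 : ℝ) (4 * π), ‖deriv (deriv H) x‖ ≤ C₀) →
      Differentiable ℂ (PsiTransform (fun x => φ x) N c H) ∧
      ∀ s : ℂ, ‖PsiTransform (fun x => φ x) N c H s‖
        ≤ C * (N : ℝ) ^ (σ * |s.re + 1 / 2|) / ((‖s‖ + 1) ^ 2 * c) := by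
  obtain ⟨C, hC⟩ := PsiTransform_entire_and_bounded_general hσ0.le
    (fun k _ => integrable_pow_mul_schwartzMap φ k) (hsupp.trans Ioo_subset_Icc_self) C₀
  exact ⟨C, fun N hN c hc => hC N hN.two_le c <|
    (Real.rpow_lt_self_of_one_lt (mod_cast hN.one_lt) (by linarith)).trans_le hc⟩
end

section
/- There is an absolute constant C such that the following holds: for every integer d ≥ 2 and every real X ≥ 2, if either a(n) = log n for all n ≤ X or a(n) = 1 for all n ≤ X, then ∫_{−∞}^{∞} Σ*_{χ mod d} |Σ_{1 ≤ n ≤ X} a(n) χ(n) n^{−1/2−it}|⁴ dt/(t²+1) ≤ C · d · (log(dX))^{13}. -/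
open MeasureTheory Real Complex

/-- The sum of `f` over all primitive Dirichlet characters modulo `d`
(a finite sum, since there are finitely many Dirichlet characters modulo `d`). -/
noncomputable def sumPrimitive (d : ℕ) (f : DirichletCharacter ℂ d → ℝ) : ℝ :=
  ∑ᶠ χ ∈ {χ : DirichletCharacter ℂ d | χ.IsPrimitive}, f χ

/-!
The square of the Dirichlet polynomial is a Dirichlet polynomial with coefficients
`a n * χ n * (a m * χ m)` at `n * m`. The Fourier transform of the Lorentzian
`1 / (1 / 4 + t ^ 2)`, which dominates `1 / (t ^ 2 + 1)`, is `2 * π * exp (-|x| / 2)`, so the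
terms at `M` and `N` of a Dirichlet polynomial on the critical line pair to `2 * π / max M N`. By
partial summation, the fourth moment becomes an average over `k` of the mean squares over `χ` of the
sums over `n * m ≤ k`.

By the hyperbola method, each such sum reduces to sums with `n ≤ √k` and `m` in an initial segment.
Expanding `χ m` through Gauss sums into additive characters, the sum over `m` is at most
`min (k / n) (d / |h|)` up to the variation of `a`, where `h` is the dual frequency. After splitting
`n` and `|h|` dyadically, orthogonality of all characters modulo `d` bounds the mean square by a
count of the solutions of `n' * h ≡ n * h'` modulo `d`; beyond the expected main term, each pair
`(n, n')` contributes in proportion to its greatest common divisor, which costs only a logarithm on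
average.
-/

section LorentzianKernel

open FourierTransform

variable {a : ℝ}

theorem integrable_inv_sq_add_sq (ha : 0 < a) : Integrable fun t : ℝ ↦ (a ^ 2 + t ^ 2)⁻¹ := by
  refine ((integrable_inv_one_add_sq.comp_mul_left' (inv_ne_zero ha.ne')).const_mul
    (a ^ 2)⁻¹).congr (.of_forall fun t ↦ ?_)
  simp only [← mul_inv]
  congr 1
  field_simp

theorem integrable_exp_neg_mul_abs (ha : 0 < a) : Integrable fun x : ℝ ↦ rexp (-a * |x|) := by
  rw [← integrableOn_univ, ← Set.Iic_union_Ioi (a := (0 : ℝ)), integrableOn_union]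
  constructor
  · refine (integrableOn_exp_mul_Iic ha 0).congr_fun (fun x hx ↦ ?_) measurableSet_Iic
    simp [abs_of_nonpos (Set.mem_Iic.1 hx)]
  · refine (integrableOn_exp_mul_Ioi (neg_neg_of_pos ha) 0).congr_fun (fun x hx ↦ ?_)
      measurableSet_Ioi
    simp [abs_of_pos (Set.mem_Ioi.1 hx)]

theorem integral_exp_neg_mul_abs_sub_mul_I (ha : 0 < a) (b : ℝ) :
    ∫ x : ℝ, cexp (-a * |x| - b * x * I) = 2 * a / (a ^ 2 + b ^ 2) := by
  have hleft : 0 < (a - b * I : ℂ).re := by simpa using ha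
  have hright : (-(a + b * I) : ℂ).re < 0 := by simpa using ha
  have eqOn_left : Set.EqOn (fun x : ℝ ↦ cexp ((a - b * I) * x))
      (fun x : ℝ ↦ cexp (-a * |x| - b * x * I)) (Set.Iic 0) := fun x hx ↦ by
    simp only [abs_of_nonpos (Set.mem_Iic.1 hx)]
    push_cast
    ring_nf
  have eqOn_right : Set.EqOn (fun x : ℝ ↦ cexp (-(a + b * I) * x))
      (fun x : ℝ ↦ cexp (-a * |x| - b * x * I)) (Set.Ioi 0) := fun x hx ↦ by
    simp only [abs_of_pos (Set.mem_Ioi.1 hx)]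
    ring_nf
  rw [← intervalIntegral.integral_Iic_add_Ioi
      ((integrableOn_exp_mul_complex_Iic hleft 0).congr_fun eqOn_left measurableSet_Iic)
      ((integrableOn_exp_mul_complex_Ioi hright 0).congr_fun eqOn_right measurableSet_Ioi),
    ← setIntegral_congr_fun measurableSet_Iic eqOn_left,
    ← setIntegral_congr_fun measurableSet_Ioi eqOn_right,
    integral_exp_mul_complex_Iic hleft, integral_exp_mul_complex_Ioi hright]
  have hl : (a - b * I : ℂ) ≠ 0 := fun h ↦ by simp [h] at hleft
  have hr : (a + b * I : ℂ) ≠ 0 := fun h ↦ by simp [h] at hright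
  have factor : (a ^ 2 + b ^ 2 : ℂ) = (a - b * I) * (a + b * I) := by
    linear_combination (b : ℂ) ^ 2 * I_sq
  rw [factor]
  simp only [ofReal_zero, mul_zero, Complex.exp_zero]
  field_simp
  ring

theorem fourier_exp_neg_mul_abs (ha : 0 < a) (w : ℝ) :
    𝓕 (fun x : ℝ ↦ ((rexp (-a * |x|) : ℝ) : ℂ)) w = 2 * a / (a ^ 2 + (2 * π * w) ^ 2) := by
  rw [Real.fourier_eq']
  calc _ = ∫ x : ℝ, cexp (-a * |x| - (2 * π * w : ℝ) * x * I) := by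
        congr 1 with x
        rw [smul_eq_mul, ofReal_exp, ← Complex.exp_add]
        congr 1
        simp
        ring
    _ = _ := by rw [integral_exp_neg_mul_abs_sub_mul_I ha]; push_cast; rfl

theorem integrable_exp_mul_I_mul_inv_sq_add_sq (ha : 0 < a) (x : ℝ) :
    Integrable fun t : ℝ ↦ cexp (x * t * I) * ((a ^ 2 + t ^ 2)⁻¹ : ℝ) := by
  refine (integrable_inv_sq_add_sq ha).ofReal.bdd_mul (c := 1) (by fun_prop)
    (.of_forall fun t ↦ ?_)
  rw [← ofReal_mul, norm_exp_ofReal_mul_I]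

theorem integral_exp_mul_I_mul_inv_sq_add_sq (ha : 0 < a) (x : ℝ) :
    ∫ t : ℝ, cexp (x * t * I) * ((a ^ 2 + t ^ 2)⁻¹ : ℝ) = π / a * rexp (-a * |x|) := by
  set f : ℝ → ℂ := fun x ↦ (rexp (-a * |x|) : ℝ)
  have fourier_f : 𝓕 f = fun w : ℝ ↦ (2 * a : ℂ) * ((a ^ 2 + (2 * π * w) ^ 2)⁻¹ : ℝ) := by
    ext w
    rw [fourier_exp_neg_mul_abs ha, div_eq_mul_inv]
    push_cast
    rfl
  have integrable_fourier : Integrable (𝓕 f) := by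
    rw [fourier_f]
    exact ((integrable_inv_sq_add_sq ha).comp_mul_left' two_pi_pos.ne').ofReal.const_mul _
  have inversion := congrFun ((by fun_prop : Continuous f).fourierInv_fourier_eq
    (integrable_exp_neg_mul_abs ha).ofReal integrable_fourier) x
  have rescale := Measure.integral_comp_mul_left
    (fun t : ℝ ↦ (2 * a : ℂ) * (cexp (x * t * I) * ((a ^ 2 + t ^ 2)⁻¹ : ℝ))) (2 * π)
  rw [Real.fourierInv_eq', fourier_f] at inversion
  calc _ = π / a * ∫ w : ℝ, 2 * a * (cexp (x * (2 * π * w : ℝ) * I) *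
          ((a ^ 2 + (2 * π * w) ^ 2)⁻¹ : ℝ)) := by
        have ha' : (a : ℂ) ≠ 0 := mod_cast ha.ne'
        have hpi : (π : ℂ) ≠ 0 := mod_cast pi_ne_zero
        rw [rescale, integral_const_mul, abs_of_pos (by positivity), real_smul]
        generalize (∫ t : ℝ, cexp (x * t * I) * ((a ^ 2 + t ^ 2)⁻¹ : ℝ)) = J
        push_cast
        field_simp
    _ = π / a * f x := by
        rw [← inversion]
        congr 2 with w
        simp only [smul_eq_mul, RCLike.inner_apply, conj_trivial]
        push_cast
        ring_nf

end LorentzianKernel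

section DirichletPolynomial

open Finset ComplexConjugate

theorem natCast_cpow_mul_conj_natCast_cpow {m n : ℕ} (hm : 1 ≤ m) (hn : 1 ≤ n) (t : ℝ) :
    (m : ℂ) ^ (-(1 / 2 : ℂ) - I * t) * conj ((n : ℂ) ^ (-(1 / 2 : ℂ) - I * t)) =
      rexp (-(Real.log m + Real.log n) / 2) *
        cexp ((Real.log n - Real.log m : ℝ) * t * I) := by
  rw [cpow_def_of_ne_zero (Nat.cast_ne_zero.2 (by lia)),
    cpow_def_of_ne_zero (Nat.cast_ne_zero.2 (by lia)), ← exp_conj,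
    ← Complex.exp_add, ← natCast_log, ← natCast_log, ofReal_exp, ← Complex.exp_add]
  simp only [map_mul, map_sub, map_neg, map_div₀, map_one, conj_ofReal, conj_I, conj_ofNat]
  push_cast
  ring_nf

theorem exp_neg_half_log_mul_exp_neg_half_abs_log_sub {m n : ℕ} (hm : 1 ≤ m) (hn : 1 ≤ n) :
    rexp (-(Real.log m + Real.log n) / 2) * rexp (-(1 / 2) * |Real.log n - Real.log m|) =
      1 / (max m n : ℕ) := by
  wlog h : m ≤ n generalizing m n
  · rw [max_comm, ← this hn hm (by lia), abs_sub_comm, add_comm (Real.log m)]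
  have hm' : (0 : ℝ) < m := mod_cast hm
  have hn' : (0 : ℝ) < n := mod_cast hn
  rw [max_eq_right h, abs_of_nonneg (sub_nonneg.2 (Real.log_le_log hm' (mod_cast h))),
    ← Real.exp_add, ← Real.exp_log (one_div_pos.2 hn'), one_div (n : ℝ), Real.log_inv]
  ring_nf

theorem integrable_natCast_cpow_mul_conj {m n : ℕ} (hm : 1 ≤ m) (hn : 1 ≤ n) :
    Integrable fun t : ℝ ↦ (m : ℂ) ^ (-(1 / 2 : ℂ) - I * t) *
      conj ((n : ℂ) ^ (-(1 / 2 : ℂ) - I * t)) * (((1 / 2) ^ 2 + t ^ 2)⁻¹ : ℝ) := by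
  simp_rw [natCast_cpow_mul_conj_natCast_cpow hm hn, mul_assoc]
  simpa only [mul_assoc] using
    (integrable_exp_mul_I_mul_inv_sq_add_sq one_half_pos _).const_mul _

theorem integral_natCast_cpow_mul_conj {m n : ℕ} (hm : 1 ≤ m) (hn : 1 ≤ n) :
    ∫ t : ℝ, (m : ℂ) ^ (-(1 / 2 : ℂ) - I * t) * conj ((n : ℂ) ^ (-(1 / 2 : ℂ) - I * t)) *
      (((1 / 2) ^ 2 + t ^ 2)⁻¹ : ℝ) = 2 * π * (1 / (max m n : ℕ) : ℝ) := by
  simp_rw [natCast_cpow_mul_conj_natCast_cpow hm hn, mul_assoc (rexp _ : ℂ)]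
  rw [integral_const_mul, integral_exp_mul_I_mul_inv_sq_add_sq one_half_pos,
    ← exp_neg_half_log_mul_exp_neg_half_abs_log_sub hm hn]
  push_cast
  ring

theorem sum_Ico_one_div_mul_add_one {M K : ℕ} (hM : 1 ≤ M) (hMK : M ≤ K) :
    ∑ k ∈ Ico M K, 1 / ((k : ℝ) * (k + 1)) + 1 / K = 1 / M := by
  induction K, hMK using Nat.le_induction with
  | base => simp
  | succ K hK ih =>
    have : (K : ℝ) ≠ 0 := by positivity [show 0 < K by lia]
    rw [sum_Ico_succ_top hK, ← ih]
    push_cast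
    field_simp
    ring

variable {ι κ : Type*} {s : Finset ι} {m : ι → ℕ} {K : ℕ}

theorem norm_sum_sq_eq_sum_mul_conj (s : Finset ι) (z : ι → ℂ) :
    ((‖∑ i ∈ s, z i‖ ^ 2 : ℝ) : ℂ) = ∑ i ∈ s, ∑ j ∈ s, z i * conj (z j) := by
  rw [ofReal_pow, ← mul_conj', map_sum, sum_mul_sum]

theorem sum_mul_conj_mul_one_div_max (c : ι → ℂ) (hm : ∀ i ∈ s, 1 ≤ m i ∧ m i ≤ K) :
    ∑ i ∈ s, ∑ j ∈ s, c i * conj (c j) * (1 / (max (m i) (m j) : ℕ) : ℝ) =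
      ((∑ k ∈ Ico 1 K, ‖∑ i ∈ s with m i ≤ k, c i‖ ^ 2 * (1 / (k * (k + 1))) +
        ‖∑ i ∈ s, c i‖ ^ 2 * (1 / K) : ℝ) : ℂ) := by
  have partial_sum (k : ℕ) : ((‖∑ i ∈ s with m i ≤ k, c i‖ ^ 2 * (1 / (k * (k + 1))) : ℝ) : ℂ) =
      ∑ i ∈ s, ∑ j ∈ s, c i * conj (c j) *
        (if max (m i) (m j) ≤ k then 1 / ((k : ℝ) * (k + 1)) else 0 : ℝ) := by
    rw [ofReal_mul, sum_filter, norm_sum_sq_eq_sum_mul_conj]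
    simp_rw [sum_mul]
    refine sum_congr rfl fun i _ ↦ sum_congr rfl fun j _ ↦ ?_
    by_cases hi : m i ≤ k <;> by_cases hj : m j ≤ k <;> simp [hi, hj]
  have telescope {M : ℕ} (hM : 1 ≤ M) (hMK : M ≤ K) : (1 / M : ℝ) =
      ∑ k ∈ Ico 1 K, (if M ≤ k then 1 / ((k : ℝ) * (k + 1)) else 0) + 1 / K := by
    rw [← sum_Ico_one_div_mul_add_one hM hMK, ← sum_filter]
    congr 2
    ext k
    simp only [mem_filter, mem_Ico]
    lia
  symm
  simp only [ofReal_add, ofReal_sum, partial_sum]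
  rw [sum_comm, ofReal_mul, norm_sum_sq_eq_sum_mul_conj, sum_mul, ← sum_add_distrib]
  refine sum_congr rfl fun i hi ↦ ?_
  rw [sum_comm, sum_mul, ← sum_add_distrib]
  refine sum_congr rfl fun j hj ↦ ?_
  rw [telescope (le_max_of_le_left (hm i hi).1) (max_le (hm i hi).2 (hm j hj).2), ← mul_sum]
  push_cast
  ring

theorem norm_sum_cpow_sq_mul (c : ι → ℂ) (w t : ℝ) :
    ((‖∑ i ∈ s, c i * (m i : ℂ) ^ (-(1 / 2 : ℂ) - I * t)‖ ^ 2 * w : ℝ) : ℂ) =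
      ∑ i ∈ s, ∑ j ∈ s, c i * conj (c j) * ((m i : ℂ) ^ (-(1 / 2 : ℂ) - I * t) *
        conj ((m j : ℂ) ^ (-(1 / 2 : ℂ) - I * t)) * w) := by
  rw [ofReal_mul, norm_sum_sq_eq_sum_mul_conj]
  simp_rw [sum_mul, map_mul]
  refine sum_congr rfl fun i _ ↦ sum_congr rfl fun j _ ↦ ?_
  ring

theorem integrable_norm_sum_cpow_sq (c : ι → ℂ) (hm : ∀ i ∈ s, 1 ≤ m i) :
    Integrable fun t : ℝ ↦
      ‖∑ i ∈ s, c i * (m i : ℂ) ^ (-(1 / 2 : ℂ) - I * t)‖ ^ 2 * ((1 / 2) ^ 2 + t ^ 2)⁻¹ := by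
  suffices Integrable fun t : ℝ ↦ ((‖∑ i ∈ s, c i * (m i : ℂ) ^ (-(1 / 2 : ℂ) - I * t)‖ ^ 2 *
    ((1 / 2) ^ 2 + t ^ 2)⁻¹ : ℝ) : ℂ) from this.re
  simp_rw [norm_sum_cpow_sq_mul]
  exact integrable_finsetSum _ fun i hi ↦ integrable_finsetSum _ fun j hj ↦
    (integrable_natCast_cpow_mul_conj (hm i hi) (hm j hj)).const_mul _

theorem integral_norm_sum_cpow_sq (c : ι → ℂ) (hm : ∀ i ∈ s, 1 ≤ m i ∧ m i ≤ K) :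
    ∫ t : ℝ, ‖∑ i ∈ s, c i * (m i : ℂ) ^ (-(1 / 2 : ℂ) - I * t)‖ ^ 2 * ((1 / 2) ^ 2 + t ^ 2)⁻¹ =
      2 * π * (∑ k ∈ Ico 1 K, ‖∑ i ∈ s with m i ≤ k, c i‖ ^ 2 * (1 / (k * (k + 1))) +
        ‖∑ i ∈ s, c i‖ ^ 2 * (1 / K)) := by
  have integrable (i) (hi : i ∈ s) (j) (hj : j ∈ s) := (integrable_natCast_cpow_mul_conj
    (hm i hi).1 (hm j hj).1).const_mul (c i * conj (c j))
  rw [← ofReal_inj, ← integral_complex_ofReal, ofReal_mul, ← sum_mul_conj_mul_one_div_max c hm]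
  simp_rw [norm_sum_cpow_sq_mul, mul_sum]
  rw [integral_finsetSum _ fun i hi ↦ integrable_finsetSum _ (integrable i hi)]
  refine sum_congr rfl fun i hi ↦ ?_
  rw [integral_finsetSum _ (integrable i hi)]
  refine sum_congr rfl fun j hj ↦ ?_
  rw [integral_const_mul, integral_natCast_cpow_mul_conj (hm i hi).1 (hm j hj).1]
  push_cast
  ring

theorem sum_Ico_one_div_add_one (hK : 1 ≤ K) :
    ∑ k ∈ Ico 1 K, 1 / ((k : ℝ) + 1) + 1 = harmonic K := by
  rw [harmonic, range_eq_Ico, sum_eq_sum_Ico_succ_bot hK]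
  push_cast
  simp [add_comm]

theorem integral_sum_norm_sum_cpow_sq_le {S : Finset κ} {c : κ → ι → ℂ} {D : ℝ} (hK : 1 ≤ K)
    (hm : ∀ i ∈ s, 1 ≤ m i ∧ m i ≤ K)
    (hD : ∀ k ∈ Icc 1 K, ∑ χ ∈ S, ‖∑ i ∈ s with m i ≤ k, c χ i‖ ^ 2 ≤ D * k) :
    ∫ t : ℝ, (∑ χ ∈ S, ‖∑ i ∈ s, c χ i * (m i : ℂ) ^ (-(1 / 2 : ℂ) - I * t)‖ ^ 2) *
      ((1 / 2) ^ 2 + t ^ 2)⁻¹ ≤ 2 * π * D * harmonic K := by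
  have whole : ∑ χ ∈ S, ‖∑ i ∈ s, c χ i‖ ^ 2 ≤ D * K := by
    simpa [filter_true_of_mem fun i hi ↦ (hm i hi).2] using hD K (right_mem_Icc.2 hK)
  simp_rw [sum_mul]
  rw [integral_finsetSum _ fun χ _ ↦ integrable_norm_sum_cpow_sq _ fun i hi ↦ (hm i hi).1]
  simp_rw [integral_norm_sum_cpow_sq _ hm]
  calc _ = 2 * π * (∑ k ∈ Ico 1 K, (∑ χ ∈ S, ‖∑ i ∈ s with m i ≤ k, c χ i‖ ^ 2) *
          (1 / (k * (k + 1))) + (∑ χ ∈ S, ‖∑ i ∈ s, c χ i‖ ^ 2) * (1 / K)) := by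
        rw [← mul_sum, sum_add_distrib, sum_comm]
        simp_rw [sum_mul]
    _ ≤ 2 * π * (∑ k ∈ Ico 1 K, D * k * (1 / (k * (k + 1))) + D * K * (1 / K)) := by
        gcongr with k hk
        exact hD k (mem_Icc.2 ⟨(mem_Ico.1 hk).1, (mem_Ico.1 hk).2.le⟩)
    _ = 2 * π * (∑ k ∈ Ico 1 K, D * (1 / (k + 1)) + D) := by
        congr 2
        · refine sum_congr rfl fun k hk ↦ ?_
          have : (k : ℝ) ≠ 0 := Nat.cast_ne_zero.2 (by grind)
          field_simp
        · field_simp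
    _ = _ := by rw [← sum_Ico_one_div_add_one hK, ← mul_sum]; ring

end DirichletPolynomial

section DirichletCharacterSums

open Finset ComplexConjugate ZMod

variable {d : ℕ} [NeZero d] {χ : DirichletCharacter ℂ d}

theorem natCast_mul_apply_eq_gaussSum_mul_sum (hχ : χ.IsPrimitive) (m : ZMod d) :
    d * χ m = gaussSum χ stdAddChar * ∑ x, stdAddChar (-(m * x)) * χ⁻¹ x := by
  calc (d * χ m : ℂ) = ZMod.dft (ZMod.dft χ) (-m) := by simp [dft_dft]
    _ = ∑ x, stdAddChar (x * m) * (χ⁻¹ (-x) * gaussSum χ stdAddChar) := by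
        simp [dft_apply (ZMod.dft _), hχ.fourierTransform_eq_inv_mul_gaussSum]
    _ = ∑ x, stdAddChar (-(m * x)) * (χ⁻¹ x * gaussSum χ stdAddChar) := by
        rw [← Equiv.sum_comp (Equiv.neg (ZMod d))]
        simp [mul_comm m]
    _ = _ := by
        rw [mul_sum]
        exact sum_congr rfl fun x _ ↦ by ring

theorem norm_gaussSum_sq (hχ : χ.IsPrimitive) : ‖gaussSum χ stdAddChar‖ ^ 2 = d := by
  have hconj : gaussSum χ⁻¹ stdAddChar⁻¹ = ∑ x : ZMod d, stdAddChar (-(1 * x)) * χ⁻¹ x :=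
    sum_congr rfl fun x _ ↦ by rw [AddChar.inv_apply, one_mul, mul_comm]
  rw [← ofReal_inj, ofReal_pow, ← mul_conj', starRingEnd_apply, star_gaussSum_eq, hconj,
    ← natCast_mul_apply_eq_gaussSum_mul_sum hχ]
  simp

theorem natCast_mul_norm_sum_mul_sum_sq_eq {ι κ : Type*} (hχ : χ.IsPrimitive) (s : Finset ι)
    (t : ι → Finset κ) (u : ι → ZMod d) (v : κ → ZMod d) (b : ι → ℂ) (a : κ → ℂ) :
    d * ‖∑ i ∈ s, b i * χ (u i) * ∑ j ∈ t i, a j * χ (v j)‖ ^ 2 =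
      ‖∑ i ∈ s, ∑ x, b i * (∑ j ∈ t i, a j * stdAddChar (-(v j * x))) *
        (χ (u i) * χ⁻¹ x)‖ ^ 2 := by
  set S := ∑ i ∈ s, b i * χ (u i) * ∑ j ∈ t i, a j * χ (v j)
  set S' := ∑ i ∈ s, ∑ x, b i * (∑ j ∈ t i, a j * stdAddChar (-(v j * x))) * (χ (u i) * χ⁻¹ x)
  have completion : d * S = gaussSum χ stdAddChar * S' := by
    simp only [S, S', mul_sum, sum_mul]
    refine sum_congr rfl fun i _ ↦ ?_
    rw [sum_comm]
    refine sum_congr rfl fun j _ ↦ ?_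
    have := natCast_mul_apply_eq_gaussSum_mul_sum hχ (v j)
    rw [mul_sum] at this
    calc _ = b i * χ (u i) * a j * (d * χ (v j)) := by ring
      _ = _ := by
        rw [this, mul_sum]
        exact sum_congr rfl fun x _ ↦ by ring
  have norm_completion := congrArg (‖·‖ ^ 2) completion
  simp only [norm_mul, mul_pow, norm_gaussSum_sq hχ, Complex.norm_natCast] at norm_completion
  exact mul_left_cancel₀ (Nat.cast_ne_zero.2 (NeZero.ne d)) (by linear_combination norm_completion)

theorem sum_mul_inv_mul_conj (u w u' w' : ZMod d) :
    ∑ χ : DirichletCharacter ℂ d, χ u * χ⁻¹ w * conj (χ u' * χ⁻¹ w') =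
      if IsUnit (u' * w) ∧ u' * w = u * w' then (d.totient : ℂ) else 0 := by
  have combine (χ : DirichletCharacter ℂ d) :
      χ u * χ⁻¹ w * conj (χ u' * χ⁻¹ w') = χ⁻¹ (u' * w) * χ (u * w') := by
    simp only [map_mul, starRingEnd_apply, MulChar.star_apply', inv_inv]
    ring
  simp_rw [combine]
  by_cases hunit : IsUnit (u' * w)
  · have inv_apply (χ : DirichletCharacter ℂ d) : χ⁻¹ (u' * w) = χ (u' * w)⁻¹ := by
      rw [MulChar.inv_apply_eq_inv, Ring.inverse_eq_inv', inv_eq_iff_eq_inv, eq_comm]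
      refine inv_eq_of_mul_eq_one_left ?_
      rw [← map_mul, ZMod.mul_inv_of_unit _ hunit, map_one]
    simp_rw [inv_apply, DirichletCharacter.sum_char_inv_mul_char_eq ℂ hunit, hunit, true_and]
  · simp [MulChar.map_nonunit _ hunit, hunit]

open Classical in
theorem sum_norm_sum_mul_inv_sq_le {ι : Type*} {s : Finset ι} {u w : ι → ZMod d} {c : ι → ℂ}
    {W : ℝ} (hc : ∀ i ∈ s, ‖c i‖ ≤ W) :
    ∑ χ : DirichletCharacter ℂ d, ‖∑ i ∈ s, c i * (χ (u i) * χ⁻¹ (w i))‖ ^ 2 ≤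
      d * W ^ 2 * #{p ∈ s ×ˢ s | IsUnit (u p.2 * w p.1) ∧ u p.2 * w p.1 = u p.1 * w p.2} := by
  have expand : ((∑ χ : DirichletCharacter ℂ d,
      ‖∑ i ∈ s, c i * (χ (u i) * χ⁻¹ (w i))‖ ^ 2 : ℝ) : ℂ) =
      ∑ i ∈ s, ∑ j ∈ s, c i * conj (c j) * (if IsUnit (u j * w i) ∧ u j * w i = u i * w j
        then (d.totient : ℂ) else 0) := by
    simp_rw [← sum_mul_inv_mul_conj, ofReal_sum, norm_sum_sq_eq_sum_mul_conj, mul_sum, map_mul]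
    rw [sum_comm]
    refine sum_congr rfl fun i _ ↦ ?_
    rw [sum_comm]
    exact sum_congr rfl fun j _ ↦ sum_congr rfl fun χ _ ↦ by ring
  rw [← Complex.norm_of_nonneg (r := ∑ χ : DirichletCharacter ℂ d, _) (by positivity), expand]
  calc _ ≤ ∑ i ∈ s, ∑ j ∈ s, W * W * (if IsUnit (u j * w i) ∧ u j * w i = u i * w j
          then (d : ℝ) else 0) := by
        refine norm_sum_le_of_le _ fun i hi ↦ norm_sum_le_of_le _ fun j hj ↦ ?_
        have hW : 0 ≤ W := (norm_nonneg _).trans (hc i hi)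
        rw [norm_mul, norm_mul, RCLike.norm_conj]
        gcongr
        · exact hc i hi
        · exact hc j hj
        · split_ifs
          · exact (Complex.norm_natCast _).trans_le (mod_cast Nat.totient_le d)
          · simp
    _ = _ := by
        simp_rw [← mul_sum]
        rw [← sum_product', ← sum_filter, sum_const, nsmul_eq_mul]
        ring

end DirichletCharacterSums

section BoundedVariation

open Finset

/-- The total variation of the sequence `0, a 1, a 2, …, a N`. It is the constant in Abel
summation against the coefficients `a 1, …, a N`. -/
noncomputable def headVariation {E : Type*} [SeminormedAddCommGroup E] (a : ℕ → E) (N : ℕ) : ℝ :=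
  ‖a 1‖ + ∑ n ∈ Ico 1 N, ‖a (n + 1) - a n‖

theorem headVariation_nonneg {E : Type*} [SeminormedAddCommGroup E] (a : ℕ → E) (N : ℕ) :
    0 ≤ headVariation a N := by
  unfold headVariation
  positivity

theorem headVariation_mono {E : Type*} [SeminormedAddCommGroup E] (a : ℕ → E) :
    Monotone (headVariation a) := fun M N hMN ↦ by
  unfold headVariation
  gcongr

theorem norm_le_headVariation {E : Type*} [SeminormedAddCommGroup E] (a : ℕ → E) {m N : ℕ}
    (hm : 1 ≤ m) (hmN : m ≤ N) : ‖a m‖ ≤ headVariation a N := by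
  refine le_trans ?_ (headVariation_mono a hmN)
  calc ‖a m‖ = ‖a 1 + ∑ n ∈ Ico 1 m, (a (n + 1) - a n)‖ := by
        rw [sum_Ico_sub _ hm, add_sub_cancel]
    _ ≤ headVariation a m := norm_add_le_of_le le_rfl (norm_sum_le _ _)

theorem one_sub_mul_sum_Icc_mul_pow {R : Type*} [CommRing R] (a : ℕ → R) (z : R) {y : ℕ}
    (hy : 1 ≤ y) :
    (1 - z) * ∑ m ∈ Icc 1 y, a m * z ^ m =
      a 1 * z + ∑ m ∈ Ico 1 y, (a (m + 1) - a m) * z ^ (m + 1) - a y * z ^ (y + 1) := by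
  induction y, hy using Nat.le_induction with
  | base => simp; ring
  | succ y hy ih =>
    rw [sum_Icc_succ_top (by lia), mul_add, ih, sum_Ico_succ_top hy]
    ring

theorem norm_one_sub_mul_sum_Icc_mul_pow_le {R : Type*} [SeminormedCommRing R] (a : ℕ → R)
    {z : R} (hz : ‖z‖ ≤ 1) {y N : ℕ} (hy : y ≤ N) :
    ‖(1 - z) * ∑ m ∈ Icc 1 y, a m * z ^ m‖ ≤ 2 * headVariation a N := by
  have norm_mul_pow_le (b : R) (k : ℕ) : ‖b * z ^ (k + 1)‖ ≤ ‖b‖ :=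
    (norm_mul_le _ _).trans <| mul_le_of_le_one_right (norm_nonneg _) <|
      (norm_pow_le' z k.succ_pos).trans (pow_le_one₀ (norm_nonneg _) hz)
  rcases Nat.eq_zero_or_pos y with rfl | hy'
  · simpa using headVariation_nonneg a N
  rw [one_sub_mul_sum_Icc_mul_pow a z hy', two_mul]
  refine norm_sub_le_of_le ((norm_add_le_of_le ?_ (norm_sum_le_of_le _ fun m _ ↦
    norm_mul_pow_le _ m)).trans (headVariation_mono a hy))
    ((norm_mul_pow_le _ y).trans (norm_le_headVariation a hy' hy))
  simpa using norm_mul_pow_le (a 1) 0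

end BoundedVariation

section AdditiveCharacterSums

open Finset ZMod

variable {d : ℕ} [NeZero d]

theorem four_mul_natAbs_valMinAbs_div_le_norm_one_sub_stdAddChar (x : ZMod d) :
    4 * (x.valMinAbs.natAbs / d : ℝ) ≤ ‖1 - stdAddChar x‖ := by
  have hd : (0 : ℝ) < d := mod_cast NeZero.pos d
  set θ : ℝ := 2 * π * x.valMinAbs / d
  have abs_half : |θ / 2| = π * (x.valMinAbs.natAbs / d) := by
    rw [Nat.cast_natAbs, Int.cast_abs, show θ / 2 = π * (x.valMinAbs / d) by ring, abs_mul,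
      abs_div, abs_of_pos pi_pos, abs_of_pos hd]
  have half_le : |θ / 2| ≤ π / 2 := by
    have : x.valMinAbs.natAbs * 2 ≤ d := by have := natAbs_valMinAbs_le x; lia
    rw [abs_half, ← mul_div_assoc, div_le_div_iff₀ hd two_pos, mul_assoc]
    exact mul_le_mul_of_nonneg_left (mod_cast this) pi_pos.le
  have eq_exp : stdAddChar x = cexp (I * θ) := by
    conv_lhs => rw [← coe_valMinAbs x, stdAddChar_coe]
    push_cast [θ]
    ring_nf
  rw [norm_sub_rev, eq_exp, norm_exp_I_mul_ofReal_sub_one, norm_mul, Real.norm_two,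
    Real.norm_eq_abs]
  have := mul_abs_le_abs_sin half_le
  rw [abs_half, ← mul_assoc, div_mul_cancel₀ _ pi_ne_zero] at this
  linarith

theorem norm_sum_Icc_mul_stdAddChar_le (a : ℕ → ℂ) {y N : ℕ} (hy : y ≤ N) (x : ZMod d) :
    ‖∑ m ∈ Icc 1 y, a m * (stdAddChar (-(m * x) : ZMod d) : ℂ)‖ ≤ headVariation a N * y := by
  refine (norm_sum_le_of_le _ fun m hm ↦ ?_).trans_eq
    (by rw [sum_const, Nat.card_Icc, nsmul_eq_mul, mul_comm, Nat.add_sub_cancel])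
  rw [norm_mul, AddChar.norm_apply, mul_one]
  exact norm_le_headVariation a (mem_Icc.1 hm).1 ((mem_Icc.1 hm).2.trans hy)

theorem norm_sum_Icc_mul_stdAddChar_le_div (a : ℕ → ℂ) {y N : ℕ} (hy : y ≤ N) {x : ZMod d}
    (hx : x ≠ 0) :
    ‖∑ m ∈ Icc 1 y, a m * (stdAddChar (-(m * x) : ZMod d) : ℂ)‖ ≤
      headVariation a N * (d / x.valMinAbs.natAbs) := by
  have hd : (0 : ℝ) < d := mod_cast NeZero.pos d
  have hx' : (0 : ℝ) < x.valMinAbs.natAbs := by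
    simpa [Nat.pos_iff_ne_zero, valMinAbs_eq_zero] using hx
  have pow_eq (m : ℕ) : (stdAddChar (-(m * x) : ZMod d) : ℂ) = stdAddChar (-x) ^ m := by
    rw [← AddChar.map_nsmul_eq_pow, nsmul_eq_mul, mul_neg]
  simp_rw [pow_eq]
  have abel := norm_one_sub_mul_sum_Icc_mul_pow_le a
    (AddChar.norm_apply (stdAddChar (N := d)) (-x)).le hy
  have away := four_mul_natAbs_valMinAbs_div_le_norm_one_sub_stdAddChar (-x)
  rw [natAbs_valMinAbs_neg] at away
  rw [norm_mul] at abel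
  have hS := norm_nonneg (∑ m ∈ Icc 1 y, a m * (stdAddChar (-x) : ℂ) ^ m)
  rw [← mul_div_assoc, le_div_iff₀ hx', ← div_le_iff₀ hd, mul_div_assoc]
  nlinarith [mul_le_mul_of_nonneg_right away hS, mul_nonneg hS (div_pos hx' hd).le]

end AdditiveCharacterSums

section Counting

open Finset

theorem card_Ico_filter_modEq_le {r : ℤ} (hr : 0 < r) {a b : ℤ} (hab : a ≤ b) (c : ℤ) :
    (#{x ∈ Ico a b | x ≡ c [ZMOD r]} : ℝ) ≤ (b - a) / r + 1 := by
  suffices (#{x ∈ Ico a b | x ≡ c [ZMOD r]} : ℚ) ≤ (b - a) / r + 1 by exact_mod_cast this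
  rw [← Int.cast_natCast, Int.Ico_filter_modEq_card a b hr c, Int.cast_max, max_le_iff]
  refine ⟨?_, by
    have : (0 : ℚ) ≤ b - a := sub_nonneg.2 (mod_cast hab)
    push_cast
    positivity⟩
  have ceil_b := Int.ceil_lt_add_one ((b - c) / (r : ℚ))
  have ceil_a := Int.le_ceil ((a - c) / (r : ℚ))
  push_cast
  have : (b - a) / (r : ℚ) = (b - c) / r - (a - c) / r := by ring
  linarith

/-- The integers `m` with `A ≤ |m| < 2 * A`. -/
noncomputable def dyadicShell (A : ℕ) : Finset ℤ := {m ∈ Ioo (-(2 * A) : ℤ) (2 * A) | A ≤ m.natAbs}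

theorem mem_dyadicShell {A : ℕ} {m : ℤ} :
    m ∈ dyadicShell A ↔ A ≤ m.natAbs ∧ m.natAbs < 2 * A := by
  simp only [dyadicShell, mem_filter, mem_Ioo]
  lia

theorem mem_dyadicShell_two_pow_iff_log_natAbs {m : ℤ} {k : ℕ} (hm : m ≠ 0) :
    m ∈ dyadicShell (2 ^ k) ↔ Nat.log 2 m.natAbs = k := by
  rw [Nat.log_eq_iff (.inr ⟨one_lt_two, Int.natAbs_ne_zero.2 hm⟩), mem_dyadicShell,
    pow_succ']

theorem card_filter_dvd_dyadicShell_le {A e : ℕ} (he : 1 ≤ e) (heA : e < 2 * A) :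
    (#{m ∈ dyadicShell A | (e : ℤ) ∣ m} : ℝ) ≤ 6 * (A / e) := by
  have subset : {m ∈ dyadicShell A | (e : ℤ) ∣ m} ⊆
      {m ∈ Ico (-(2 * A) : ℤ) (2 * A) | m ≡ 0 [ZMOD e]} := fun m hm ↦ by
    simp only [mem_filter, mem_dyadicShell, mem_Ico, Int.modEq_zero_iff_dvd] at hm ⊢
    exact ⟨by lia, hm.2⟩
  calc (#{m ∈ dyadicShell A | (e : ℤ) ∣ m} : ℝ)
      ≤ #{m ∈ Ico (-(2 * A) : ℤ) (2 * A) | m ≡ 0 [ZMOD e]} := mod_cast card_le_card subset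
    _ ≤ _ := card_Ico_filter_modEq_le (mod_cast he) (by lia) 0
    _ = 4 * (A / e) + e / e := by push_cast; field_simp; ring
    _ ≤ 4 * (A / e) + (2 * A) / e := by gcongr; exact_mod_cast heA.le
    _ = _ := by ring

theorem natCast_gcd_le_sum_filter_dvd {m n : ℤ} {N : ℕ} (hm : m ≠ 0) (hN : m.natAbs < N) :
    (m.gcd n : ℝ) ≤ ∑ e ∈ Ico 1 N, if (e : ℤ) ∣ m ∧ (e : ℤ) ∣ n then (e : ℝ) else 0 := by
  have hg : m.gcd n ∈ Ico 1 N := mem_Ico.2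
    ⟨Int.gcd_pos_of_ne_zero_left _ hm,
      (Nat.le_of_dvd (Int.natAbs_pos.2 hm) (Nat.gcd_dvd_left _ _)).trans_lt hN⟩
  refine le_trans ?_ (single_le_sum (fun e _ ↦ by positivity) hg)
  rw [if_pos ⟨Int.gcd_dvd_left .., Int.gcd_dvd_right ..⟩]

theorem sum_gcd_dyadicShell_le {A : ℕ} (hA : 1 ≤ A) :
    ∑ p ∈ dyadicShell A ×ˢ dyadicShell A, (p.1.gcd p.2 : ℝ) ≤
      36 * A ^ 2 * (1 + Real.log (2 * A)) := by
  have gcd_le (p) (hp : p ∈ dyadicShell A ×ˢ dyadicShell A) : (p.1.gcd p.2 : ℝ) ≤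
      ∑ e ∈ Ico 1 (2 * A), if (e : ℤ) ∣ p.1 ∧ (e : ℤ) ∣ p.2 then (e : ℝ) else 0 := by
    have := mem_dyadicShell.1 (mem_product.1 hp).1
    exact natCast_gcd_le_sum_filter_dvd (by lia) this.2
  have sum_e (e) (he : e ∈ Ico 1 (2 * A)) : (∑ p ∈ dyadicShell A ×ˢ dyadicShell A,
      if (e : ℤ) ∣ p.1 ∧ (e : ℤ) ∣ p.2 then (e : ℝ) else 0) ≤ 36 * A ^ 2 * (e : ℝ)⁻¹ := by
    obtain ⟨he, heA⟩ := mem_Ico.1 he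
    have : (0 : ℝ) < e := mod_cast he
    rw [← sum_filter, filter_product, sum_const, card_product, nsmul_eq_mul, Nat.cast_mul]
    calc _ ≤ (6 * (A / e)) * (6 * (A / e)) * (e : ℝ) := by
          gcongr <;> exact card_filter_dvd_dyadicShell_le he heA
      _ = _ := by field_simp; ring
  calc _ ≤ ∑ p ∈ dyadicShell A ×ˢ dyadicShell A, ∑ e ∈ Ico 1 (2 * A),
          (if (e : ℤ) ∣ p.1 ∧ (e : ℤ) ∣ p.2 then (e : ℝ) else 0) := sum_le_sum gcd_le
    _ ≤ ∑ e ∈ Ico 1 (2 * A), 36 * A ^ 2 * (e : ℝ)⁻¹ := by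
        rw [sum_comm]
        exact sum_le_sum sum_e
    _ ≤ ∑ e ∈ Icc 1 (2 * A), 36 * A ^ 2 * (e : ℝ)⁻¹ :=
        sum_le_sum_of_subset_of_nonneg Ico_subset_Icc_self fun _ _ _ ↦ by positivity
    _ = 36 * A ^ 2 * harmonic (2 * A) := by
        rw [← mul_sum, harmonic_eq_sum_Icc]
        push_cast
        rfl
    _ ≤ _ := by
        gcongr
        exact_mod_cast harmonic_le_one_add_log (2 * A)

theorem card_dyadicShell {A : ℕ} (hA : 1 ≤ A) : #(dyadicShell A) = 2 * A := by
  have split : dyadicShell A = Ioc (-(2 * A) : ℤ) (-A) ∪ Ico (A : ℤ) (2 * A) := by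
    ext m
    simp only [mem_dyadicShell, mem_union, mem_Ioc, mem_Ico]
    lia
  rw [split, card_union_of_disjoint, Int.card_Ioc, Int.card_Ico]
  · lia
  · rw [disjoint_left]
    intro m
    simp only [mem_Ioc, mem_Ico]
    lia

open Classical in
/-- The quadruples `(n, n'), (h, h')` with `n, n' ∈ S` and `h, h' ∈ T` satisfying
`n' h ≡ n h'` modulo `d`, both sides being coprime to `d`. They are the pairs `(n, h), (n', h')`
that survive in the second moment of `χ n * χ⁻¹ h` over all characters modulo `d`. -/
noncomputable def congruenceQuadruples (d : ℕ) (S T : Finset ℤ) :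
    Finset ((ℤ × ℤ) × (ℤ × ℤ)) :=
  {q ∈ (S ×ˢ S) ×ˢ (T ×ˢ T) | IsUnit (q.1.2 * q.2.1 : ZMod d) ∧
    (q.1.2 * q.2.1 : ZMod d) = q.1.1 * q.2.2}

theorem card_congruenceQuadruples_comm (d : ℕ) (S T : Finset ℤ) :
    #(congruenceQuadruples d S T) = #(congruenceQuadruples d T S) := by
  suffices ∀ S T : Finset ℤ, #(congruenceQuadruples d S T) ≤ #(congruenceQuadruples d T S) from
    (this S T).antisymm (this T S)
  intro S T
  refine card_le_card_of_injOn Prod.swap ?_ Prod.swap_injective.injOn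
  rintro ⟨⟨n, n'⟩, ⟨h, h'⟩⟩ hq
  simp only [congruenceQuadruples, mem_coe, mem_filter, mem_product] at hq ⊢
  obtain ⟨⟨hS, hT⟩, hunit, heq⟩ := hq
  simp only [Prod.swap]
  refine ⟨⟨hT, hS⟩, ?_, ?_⟩
  · rwa [mul_comm, ← heq]
  · rw [mul_comm, ← heq, mul_comm]

variable {d A B : ℕ}

theorem mul_gcd_dvd_of_congruenceQuadruple {n n' h h' : ℤ}
    (hunit : IsUnit (n' * h : ZMod d)) (heq : (n' * h : ZMod d) = n * h') :
    (d * n.gcd n' : ℤ) ∣ n' * h - n * h' := by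
  have hd : (d : ℤ) ∣ n' * h - n * h' := by
    rw [← ZMod.intCast_zmod_eq_zero_iff_dvd]
    push_cast
    rw [heq, sub_self]
  have hn' : IsCoprime (d : ℤ) n' :=
    (ZMod.coe_int_isUnit_iff_isCoprime n' d).1 (isUnit_of_mul_isUnit_left hunit)
  refine IsCoprime.mul_dvd (hn'.of_isCoprime_of_dvd_right (Int.gcd_dvd_right ..)) hd ?_
  exact dvd_sub ((Int.gcd_dvd_right ..).mul_right _) ((Int.gcd_dvd_left ..).mul_right _)

theorem card_filter_mul_sub_mul_eq_le {n n' : ℤ} (hn' : n' ≠ 0) (B : ℕ) (c : ℤ) :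
    (#{p ∈ dyadicShell B ×ˢ dyadicShell B | n' * p.1 - n * p.2 = c} : ℝ) ≤
      4 * B * n.gcd n' / n'.natAbs + 1 := by
  rcases eq_empty_or_nonempty {p ∈ dyadicShell B ×ˢ dyadicShell B | n' * p.1 - n * p.2 = c}
    with hempty | ⟨⟨k, k'⟩, hk⟩
  · rw [hempty, card_empty, Nat.cast_zero]
    positivity
  have hg : 0 < n.gcd n' := Int.gcd_pos_of_ne_zero_right _ hn'
  obtain ⟨v, hv⟩ : n.gcd n' ∣ n'.natAbs := Nat.gcd_dvd_right _ _
  have hv0 : 0 < v := Nat.pos_of_ne_zero fun h ↦ by simp [h] at hv; lia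
  have modEq {h h' : ℤ} (heq : n' * h - n * h' = c) : h' ≡ k' [ZMOD v] := by
    have hmod : n * h' ≡ n * k' [ZMOD n'.natAbs] := by
      rw [Int.modEq_iff_dvd, Int.natAbs_dvd]
      exact ⟨k - h, by linear_combination heq - (mem_filter.1 hk).2⟩
    have := hmod.cancel_left_div_gcd (mod_cast Int.natAbs_pos.2 hn')
    rwa [show Int.gcd n'.natAbs n = n.gcd n' from Nat.gcd_comm .., hv, Nat.cast_mul,
      Int.mul_ediv_cancel_left _ (mod_cast hg.ne')] at this
  have inj : #{p ∈ dyadicShell B ×ˢ dyadicShell B | n' * p.1 - n * p.2 = c} ≤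
      #{x ∈ Ico (-(2 * B) : ℤ) (2 * B) | x ≡ k' [ZMOD v]} := by
    refine card_le_card_of_injOn Prod.snd (fun p hp ↦ ?_) fun p hp q hq hpq ↦ ?_
    · simp only [mem_coe, mem_filter, mem_product, mem_dyadicShell, mem_Ico] at hp ⊢
      exact ⟨by lia, modEq hp.2⟩
    · simp only [mem_coe, mem_filter] at hp hq
      refine Prod.ext (mul_left_cancel₀ hn' ?_) hpq
      linear_combination hp.2 - hq.2 + n * hpq
  calc _ ≤ (#{x ∈ Ico (-(2 * B) : ℤ) (2 * B) | x ≡ k' [ZMOD v]} : ℝ) := mod_cast inj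
    _ ≤ _ := card_Ico_filter_modEq_le (mod_cast hv0) (by lia) k'
    _ = _ := by
        rw [hv]
        push_cast
        field_simp
        ring

theorem card_filter_mul_sub_mul_eq_le_of_mem_dyadicShell (hA : 1 ≤ A) (hAB : A ≤ B) (n : ℤ)
    {n' : ℤ} (hn' : n' ∈ dyadicShell A) (c : ℤ) :
    (#{p ∈ dyadicShell B ×ˢ dyadicShell B | n' * p.1 - n * p.2 = c} : ℝ) ≤
      5 * (B / A) * n.gcd n' := by
  rw [mem_dyadicShell] at hn'
  have hA' : (0 : ℝ) < A := mod_cast hA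
  have hAn' : (A : ℝ) ≤ n'.natAbs := mod_cast hn'.1
  have hn'0 : n' ≠ 0 := by lia
  have hg : (1 : ℝ) ≤ n.gcd n' := mod_cast Int.gcd_pos_of_ne_zero_right n hn'0
  calc (_ : ℝ) ≤ 4 * B * n.gcd n' / n'.natAbs + 1 := card_filter_mul_sub_mul_eq_le hn'0 B c
    _ ≤ 4 * B * n.gcd n' / A + B / A * n.gcd n' := by
        gcongr
        exact one_le_mul_of_one_le_of_one_le ((one_le_div hA').2 (mod_cast hAB)) hg
    _ = _ := by ring

theorem natAbs_mul_sub_mul_le_of_mem_dyadicShell {n n' h h' : ℤ} (hn : n ∈ dyadicShell A)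
    (hn' : n' ∈ dyadicShell A) (hh : h ∈ dyadicShell B) (hh' : h' ∈ dyadicShell B) :
    (n' * h - n * h').natAbs ≤ 8 * A * B := by
  rw [mem_dyadicShell] at hn hn' hh hh'
  calc _ ≤ (n' * h).natAbs + (n * h').natAbs := Int.natAbs_sub_le _ _
    _ ≤ 2 * A * (2 * B) + 2 * A * (2 * B) := by
        rw [Int.natAbs_mul, Int.natAbs_mul]
        exact add_le_add (Nat.mul_le_mul hn'.2.le hh.2.le) (Nat.mul_le_mul hn.2.le hh'.2.le)
    _ = _ := by ring

theorem card_Icc_neg_div_le (a b : ℕ) :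
    (#(Icc (-(a / b : ℕ) : ℤ) (a / b : ℕ)) : ℝ) ≤ 2 * (a / b) + 1 := by
  calc (#(Icc (-(a / b : ℕ) : ℤ) (a / b : ℕ)) : ℝ) = 2 * (a / b : ℕ) + 1 := by
        rw [Int.card_Icc]
        exact_mod_cast (by lia : ((a / b : ℕ) + 1 - -(a / b : ℕ) : ℤ).toNat = 2 * (a / b) + 1)
    _ ≤ _ := by gcongr; exact Nat.cast_div_le

open Classical in
theorem card_filter_isUnit_and_eq_le (hd : 1 ≤ d) (hA : 1 ≤ A) (hAB : A ≤ B) {n n' : ℤ}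
    (hn : n ∈ dyadicShell A) (hn' : n' ∈ dyadicShell A) :
    (#{p ∈ dyadicShell B ×ˢ dyadicShell B | IsUnit (n' * p.1 : ZMod d) ∧
      (n' * p.1 : ZMod d) = n * p.2} : ℝ) ≤ 80 * (B ^ 2 / d) + 5 * (B / A) * n.gcd n' := by
  set s := {p ∈ dyadicShell B ×ˢ dyadicShell B | IsUnit (n' * p.1 : ZMod d) ∧
      (n' * p.1 : ZMod d) = n * p.2}
  have hg : 0 < n.gcd n' := Int.gcd_pos_of_ne_zero_right _ (by rw [mem_dyadicShell] at hn'; lia)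
  set Q := 8 * A * B / (d * n.gcd n')
  have eq_mul {p q} (hp : p ∈ s) (hpq : (n' * p.1 - n * p.2) / (d * n.gcd n' : ℤ) = q) :
      n' * p.1 - n * p.2 = d * n.gcd n' * q := by
    obtain ⟨hunit, heq⟩ := (mem_filter.1 hp).2
    rw [← hpq, Int.mul_ediv_cancel' (mul_gcd_dvd_of_congruenceQuadruple hunit heq)]
  have maps_to : (s : Set (ℤ × ℤ)).MapsTo
      (fun p ↦ (n' * p.1 - n * p.2) / (d * n.gcd n' : ℤ)) (Icc (-Q : ℤ) Q) := fun p hp ↦ by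
    obtain ⟨hh, hh'⟩ := mem_product.1 (mem_filter.1 hp).1
    have natAbs_le := natAbs_mul_sub_mul_le_of_mem_dyadicShell hn hn' hh hh'
    rw [eq_mul hp rfl, Int.natAbs_mul] at natAbs_le
    rw [mem_coe, mem_Icc, ← abs_le, Int.abs_eq_natAbs, Nat.cast_le,
      Nat.le_div_iff_mul_le (by positivity)]
    simpa [mul_comm, Int.natAbs_mul] using natAbs_le
  have fiber (q : ℤ) : (#{p ∈ s | (n' * p.1 - n * p.2) / (d * n.gcd n' : ℤ) = q} : ℝ) ≤
      5 * (B / A) * n.gcd n' := by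
    refine le_trans ?_ (card_filter_mul_sub_mul_eq_le_of_mem_dyadicShell hA hAB n hn'
      (d * n.gcd n' * q))
    refine mod_cast card_le_card fun p hp ↦ ?_
    obtain ⟨hps, hpq⟩ := mem_filter.1 hp
    exact mem_filter.2 ⟨(mem_filter.1 hps).1, eq_mul hps hpq⟩
  have : (0 : ℝ) < A := mod_cast hA
  have : (0 : ℝ) < d := mod_cast hd
  have : (0 : ℝ) < n.gcd n' := mod_cast hg
  calc (#s : ℝ) = ∑ q ∈ Icc (-Q : ℤ) Q,
          (#{p ∈ s | (n' * p.1 - n * p.2) / (d * n.gcd n' : ℤ) = q} : ℝ) :=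
        mod_cast card_eq_sum_card_fiberwise maps_to
    _ ≤ #(Icc (-Q : ℤ) Q) * (5 * (B / A) * n.gcd n') := by
        simpa only [nsmul_eq_mul] using sum_le_card_nsmul _ _ _ fun q _ ↦ fiber q
    _ ≤ (2 * ((8 * A * B : ℕ) / (d * n.gcd n' : ℕ)) + 1) * (5 * (B / A) * n.gcd n') := by
        gcongr
        exact card_Icc_neg_div_le _ _
    _ = _ := by push_cast; field_simp; ring

theorem card_congruenceQuadruples_dyadicShell_le_of_le (hd : 1 ≤ d) (hA : 1 ≤ A) (hAB : A ≤ B) :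
    (#(congruenceQuadruples d (dyadicShell A) (dyadicShell B)) : ℝ) ≤
      320 * (A ^ 2 * B ^ 2 / d) + 180 * (A * B) * (1 + Real.log (2 * A)) := by
  classical
  have : (0 : ℝ) < A := mod_cast hA
  calc (#(congruenceQuadruples d (dyadicShell A) (dyadicShell B)) : ℝ)
      = ∑ q ∈ dyadicShell A ×ˢ dyadicShell A, (#{p ∈ dyadicShell B ×ˢ dyadicShell B |
          IsUnit (q.2 * p.1 : ZMod d) ∧ (q.2 * p.1 : ZMod d) = q.1 * p.2} : ℝ) := by
        simp only [congruenceQuadruples, card_filter, sum_product]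
        push_cast
        rfl
    _ ≤ ∑ q ∈ dyadicShell A ×ˢ dyadicShell A,
          (80 * (B ^ 2 / d) + 5 * (B / A) * (q.1.gcd q.2 : ℝ)) := sum_le_sum fun q hq ↦
        card_filter_isUnit_and_eq_le hd hA hAB (mem_product.1 hq).1 (mem_product.1 hq).2
    _ = (2 * A) ^ 2 * (80 * (B ^ 2 / d)) +
          5 * (B / A) * ∑ q ∈ dyadicShell A ×ˢ dyadicShell A, (q.1.gcd q.2 : ℝ) := by
        rw [sum_add_distrib, sum_const, card_product, card_dyadicShell hA, nsmul_eq_mul, mul_sum]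
        push_cast
        ring
    _ ≤ (2 * A) ^ 2 * (80 * (B ^ 2 / d)) +
          5 * (B / A) * (36 * A ^ 2 * (1 + Real.log (2 * A))) := by
        gcongr
        exact sum_gcd_dyadicShell_le hA
    _ = _ := by field_simp; ring

theorem card_congruenceQuadruples_dyadicShell_le (hd : 1 ≤ d) (hA : 1 ≤ A) (hB : 1 ≤ B) :
    (#(congruenceQuadruples d (dyadicShell A) (dyadicShell B)) : ℝ) ≤
      320 * (A ^ 2 * B ^ 2 / d) + 180 * (A * B) * (1 + Real.log (2 * A)) := by
  rcases le_total A B with hAB | hBA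
  · exact card_congruenceQuadruples_dyadicShell_le_of_le hd hA hAB
  · have : (0 : ℝ) < B := mod_cast hB
    rw [card_congruenceQuadruples_comm]
    calc _ ≤ 320 * (B ^ 2 * A ^ 2 / d) + 180 * (B * A) * (1 + Real.log (2 * B)) :=
          card_congruenceQuadruples_dyadicShell_le_of_le hd hB hBA
      _ ≤ 320 * (B ^ 2 * A ^ 2 / d) + 180 * (B * A) * (1 + Real.log (2 * A)) := by gcongr
      _ = _ := by ring

end Counting

section DyadicDecomposition

open Finset

theorem norm_sum_sq_le_card_mul_sum_norm_sum_fiber_sq {ι κ : Type*} [DecidableEq κ] {s : Finset ι}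
    {t : Finset κ} {g : ι → κ} (hg : ∀ i ∈ s, g i ∈ t) (f : ι → ℂ) :
    ‖∑ i ∈ s, f i‖ ^ 2 ≤ #t * ∑ k ∈ t, ‖∑ i ∈ s with g i = k, f i‖ ^ 2 := by
  rw [← sum_fiberwise_of_maps_to hg f]
  exact (pow_le_pow_left₀ (norm_nonneg _) (norm_sum_le _ _) 2).trans sq_sum_le_card_mul_sum_sq

theorem log_two_mul_two_pow_le {α T : ℕ} (h : α < T) : Real.log (2 * 2 ^ α) ≤ T := by
  calc Real.log (2 * 2 ^ α) = (α + 1 : ℕ) * Real.log 2 := by rw [← pow_succ', Real.log_pow]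
    _ ≤ (T : ℕ) * 1 := by
        gcongr
        · exact h
        · linarith [Real.log_two_lt_d9]
    _ = T := mul_one _

variable {d : ℕ} [NeZero d] {A B k T J : ℕ} {W : ℝ}

open Classical in
theorem card_filter_isUnit_and_eq_le_card_congruenceQuadruples {s : Finset (ℕ × ZMod d)}
    {S T : Finset ℤ} (hs : ∀ p ∈ s, (p.1 : ℤ) ∈ S ∧ p.2.valMinAbs ∈ T) :
    #{p ∈ s ×ˢ s | IsUnit (p.2.1 * p.1.2 : ZMod d) ∧ (p.2.1 * p.1.2 : ZMod d) = p.1.1 * p.2.2} ≤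
      #(congruenceQuadruples d S T) := by
  refine card_le_card_of_injOn (fun p ↦ ((p.1.1, p.2.1), (p.1.2.valMinAbs, p.2.2.valMinAbs)))
    (fun p hp ↦ ?_) fun p _ q _ hpq ↦ ?_
  · obtain ⟨hps, hp⟩ := mem_filter.1 hp
    obtain ⟨h₁, h₂⟩ := mem_product.1 hps
    simp only [congruenceQuadruples, mem_coe, mem_filter, mem_product, ZMod.coe_valMinAbs,
      Int.cast_natCast]
    exact ⟨⟨⟨(hs _ h₁).1, (hs _ h₂).1⟩, (hs _ h₁).2, (hs _ h₂).2⟩, hp⟩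
  · simp only [Prod.mk.injEq, Nat.cast_inj, ZMod.injective_valMinAbs.eq_iff] at hpq
    grind

theorem sum_norm_sum_dyadicShell_sq_le (hA : 1 ≤ A) (hB : 1 ≤ B) (hAk : A ^ 2 ≤ k)
    {s : Finset (ℕ × ZMod d)}
    (hs : ∀ p ∈ s, (p.1 : ℤ) ∈ dyadicShell A ∧ p.2.valMinAbs ∈ dyadicShell B)
    {c : ℕ × ZMod d → ℂ} (hc : ∀ p ∈ s, ‖c p‖ ≤ W * min (k / A : ℝ) (d / B)) :
    ∑ χ : DirichletCharacter ℂ d, ‖∑ p ∈ s, c p * (χ p.1 * χ⁻¹ p.2)‖ ^ 2 ≤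
      500 * W ^ 2 * k * d ^ 2 * (1 + Real.log (2 * A)) := by
  have hd : 1 ≤ d := NeZero.one_le
  have : (0 : ℝ) < d := mod_cast hd
  have : (0 : ℝ) < B := mod_cast hB
  have hA' : (1 : ℝ) ≤ A := mod_cast hA
  have hAk' : (A : ℝ) ^ 2 ≤ k := mod_cast hAk
  set μ := min (k / A : ℝ) (d / B)
  have : 0 ≤ μ := by positivity
  have hlog : 0 ≤ Real.log (2 * A) := Real.log_nonneg (by linarith)
  have sq_le : μ ^ 2 ≤ (d / B) ^ 2 := by gcongr; exact min_le_right ..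
  have sq_le' : μ ^ 2 ≤ k / A * (d / B) := by
    rw [sq]
    gcongr
    exacts [min_le_left .., min_le_right ..]
  calc _ ≤ d * (W * μ) ^ 2 * #(congruenceQuadruples d (dyadicShell A) (dyadicShell B)) := by
        refine (sum_norm_sum_mul_inv_sq_le hc).trans ?_
        gcongr
        exact card_filter_isUnit_and_eq_le_card_congruenceQuadruples hs
    _ ≤ d * (W * μ) ^ 2 * (320 * (A ^ 2 * B ^ 2 / d) +
          180 * (A * B) * (1 + Real.log (2 * A))) := by
        gcongr
        exact card_congruenceQuadruples_dyadicShell_le hd hA hB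
    _ = d * W ^ 2 * (μ ^ 2 * (320 * (A ^ 2 * B ^ 2 / d)) +
          μ ^ 2 * (180 * (A * B) * (1 + Real.log (2 * A)))) := by ring
    _ ≤ d * W ^ 2 * ((d / B) ^ 2 * (320 * (A ^ 2 * B ^ 2 / d)) +
          k / A * (d / B) * (180 * (A * B) * (1 + Real.log (2 * A)))) := by gcongr
    _ = W ^ 2 * d ^ 2 * (320 * (A ^ 2 * 1) + 180 * (k * (1 + Real.log (2 * A)))) := by
        field_simp
    _ ≤ W ^ 2 * d ^ 2 * (320 * (k * (1 + Real.log (2 * A))) +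
          180 * (k * (1 + Real.log (2 * A)))) := by
        gcongr
        linarith
    _ = _ := by ring

variable {s : Finset (ℕ × ZMod d)} {c : ℕ × ZMod d → ℂ}

theorem sum_norm_sum_filter_log_sq_le (hW : 0 ≤ W)
    (hs : ∀ p ∈ s, 1 ≤ p.1 ∧ p.1 ^ 2 ≤ k ∧ p.1 < 2 ^ T ∧ p.2 ≠ 0)
    (hc : ∀ p ∈ s, ‖c p‖ ≤ W * min (k / p.1 : ℝ) (d / p.2.valMinAbs.natAbs)) (α β : ℕ) :
    ∑ χ : DirichletCharacter ℂ d,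
      ‖∑ p ∈ s with (Nat.log 2 p.1, Nat.log 2 p.2.valMinAbs.natAbs) = (α, β),
        c p * (χ p.1 * χ⁻¹ p.2)‖ ^ 2 ≤ 500 * W ^ 2 * k * d ^ 2 * (1 + T) := by
  set r := {p ∈ s | (Nat.log 2 p.1, Nat.log 2 p.2.valMinAbs.natAbs) = (α, β)}
  have mem_shell (p) (hp : p ∈ r) :
      (p.1 : ℤ) ∈ dyadicShell (2 ^ α) ∧ p.2.valMinAbs ∈ dyadicShell (2 ^ β) := by
    obtain ⟨hps, hp⟩ := mem_filter.1 hp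
    obtain ⟨hn, -, -, hx⟩ := hs p hps
    rw [mem_dyadicShell_two_pow_iff_log_natAbs (by lia),
      mem_dyadicShell_two_pow_iff_log_natAbs (by simpa using hx)]
    exact Prod.ext_iff.1 hp
  have c_le (p) (hp : p ∈ r) : ‖c p‖ ≤ W * min (k / (2 ^ α : ℕ) : ℝ) (d / (2 ^ β : ℕ)) := by
    obtain ⟨hn, hx⟩ := mem_shell p hp
    refine (hc p (mem_filter.1 hp).1).trans ?_
    gcongr
    exacts [(mem_dyadicShell.1 hn).1, (mem_dyadicShell.1 hx).1]
  rcases r.eq_empty_or_nonempty with hr | ⟨p, hp⟩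
  · simp only [hr, sum_empty, norm_zero, ne_eq, OfNat.ofNat_ne_zero, not_false_eq_true,
      zero_pow, sum_const_zero]
    positivity
  obtain ⟨-, hpk, hpT, -⟩ := hs p (mem_filter.1 hp).1
  have hαp : 2 ^ α ≤ p.1 := (mem_dyadicShell.1 (mem_shell p hp).1).1
  have hαT : α < T := (Nat.pow_lt_pow_iff_right one_lt_two).1 (hαp.trans_lt hpT)
  refine (sum_norm_sum_dyadicShell_sq_le Nat.one_le_two_pow Nat.one_le_two_pow
    ((Nat.pow_le_pow_left hαp 2).trans hpk) mem_shell c_le).trans ?_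
  gcongr
  exact_mod_cast log_two_mul_two_pow_le hαT

theorem sum_norm_sum_mul_inv_sq_le_of_norm_le_min (hdJ : d < 2 ^ J) (hW : 0 ≤ W)
    (hs : ∀ p ∈ s, 1 ≤ p.1 ∧ p.1 ^ 2 ≤ k ∧ p.1 < 2 ^ T ∧ p.2 ≠ 0)
    (hc : ∀ p ∈ s, ‖c p‖ ≤ W * min (k / p.1 : ℝ) (d / p.2.valMinAbs.natAbs)) :
    ∑ χ : DirichletCharacter ℂ d, ‖∑ p ∈ s, c p * (χ p.1 * χ⁻¹ p.2)‖ ^ 2 ≤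
      500 * (T * J) ^ 2 * (1 + T) * W ^ 2 * k * d ^ 2 := by
  have maps_to : ∀ p ∈ s, (Nat.log 2 p.1, Nat.log 2 p.2.valMinAbs.natAbs) ∈
      range T ×ˢ range J := fun p hp ↦ by
    obtain ⟨hn, -, hnT, hx⟩ := hs p hp
    have hn0 : p.1 ≠ 0 := by lia
    have hx0 : p.2.valMinAbs.natAbs ≠ 0 := by simpa using hx
    have hxJ : p.2.valMinAbs.natAbs < 2 ^ J := by
      have := p.2.natAbs_valMinAbs_le
      lia
    exact mem_product.2 ⟨mem_range.2 (Nat.log_lt_of_lt_pow hn0 hnT),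
      mem_range.2 (Nat.log_lt_of_lt_pow hx0 hxJ)⟩
  calc _ ≤ ∑ χ : DirichletCharacter ℂ d, #(range T ×ˢ range J) * ∑ q ∈ range T ×ˢ range J,
          ‖∑ p ∈ s with (Nat.log 2 p.1, Nat.log 2 p.2.valMinAbs.natAbs) = q,
            c p * (χ p.1 * χ⁻¹ p.2)‖ ^ 2 :=
        sum_le_sum fun χ _ ↦ norm_sum_sq_le_card_mul_sum_norm_sum_fiber_sq maps_to _
    _ = (T * J) * ∑ q ∈ range T ×ˢ range J, ∑ χ : DirichletCharacter ℂ d,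
          ‖∑ p ∈ s with (Nat.log 2 p.1, Nat.log 2 p.2.valMinAbs.natAbs) = q,
            c p * (χ p.1 * χ⁻¹ p.2)‖ ^ 2 := by
        rw [← mul_sum, sum_comm]
        simp
    _ ≤ (T * J) * ((T * J) * (500 * W ^ 2 * k * d ^ 2 * (1 + T))) := by
        gcongr
        refine (sum_le_card_nsmul _ _ _ fun q _ ↦
          sum_norm_sum_filter_log_sq_le hW hs hc q.1 q.2).trans_eq ?_
        simp
    _ = _ := by ring

end DyadicDecomposition

section Hyperbola

open Finset

/-- The sum of `f n * f m` over the lattice points `n ≤ P`, `m ≤ y n` under the staircase with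
steps `y`; the index `0` is left out. -/
def staircaseSum {R : Type*} [CommSemiring R] (f : ℕ → R) (P : ℕ) (y : ℕ → ℕ) : R :=
  ∑ n ∈ Icc 1 P, f n * ∑ m ∈ Icc 1 (y n), f m

theorem staircaseSum_eq_sum_filter {R : Type*} [CommSemiring R] (f : ℕ → R) {N P : ℕ} {y : ℕ → ℕ}
    (hP : P ≤ N) (hy : ∀ n ∈ Icc 1 P, y n ≤ N) : staircaseSum f P y =
      ∑ p ∈ Icc 1 N ×ˢ Icc 1 N with p.1 ≤ P ∧ p.2 ≤ y p.1, f p.1 * f p.2 := by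
  simp only [staircaseSum, mul_sum]
  refine (sum_finset_product (f := fun p ↦ f p.1 * f p.2) _ (Icc 1 P) (fun n ↦ Icc 1 (y n))
    fun p ↦ ?_).symm
  simp only [mem_filter, mem_product, mem_Icc] at hy ⊢
  grind

theorem sum_filter_mul_le_add_staircaseSum {R : Type*} [CommSemiring R] (f : ℕ → R) {N P k : ℕ}
    (hP : P = min k.sqrt N) :
    ∑ p ∈ Icc 1 N ×ˢ Icc 1 N with p.1 * p.2 ≤ k, f p.1 * f p.2 + staircaseSum f P (fun _ ↦ P) =
      2 * staircaseSum f P (fun n ↦ min N (k / n)) := by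
  have hPN : P ≤ N := hP ▸ min_le_right _ _
  have hPk : P * P ≤ k := Nat.le_sqrt.1 (hP ▸ min_le_left _ _)
  have le_P {n m : ℕ} (hn : n ≤ N) (hm : m ≤ N) (hnm : n * m ≤ k) : n ≤ P ∨ m ≤ P := by
    rcases le_total n m with h | h
    · exact .inl (hP ▸ le_min (Nat.le_sqrt.2 ((Nat.mul_le_mul_left n h).trans hnm)) hn)
    · exact .inr (hP ▸ le_min (Nat.le_sqrt.2 ((Nat.mul_le_mul_right m h).trans hnm)) hm)
  set s := {p ∈ Icc 1 N ×ˢ Icc 1 N | p.1 ≤ P ∧ p.1 * p.2 ≤ k}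
  set t := {p ∈ Icc 1 N ×ˢ Icc 1 N | p.2 ≤ P ∧ p.1 * p.2 ≤ k}
  have union : s ∪ t = {p ∈ Icc 1 N ×ˢ Icc 1 N | p.1 * p.2 ≤ k} := by
    grind
  have inter : s ∩ t = {p ∈ Icc 1 N ×ˢ Icc 1 N | p.1 ≤ P ∧ p.2 ≤ P} := by
    have {n m : ℕ} (hn : n ≤ P) (hm : m ≤ P) : n * m ≤ k := (Nat.mul_le_mul hn hm).trans hPk
    rw [← filter_and]
    refine filter_congr fun p _ ↦ ?_
    grind
  have sum_s : staircaseSum f P (fun n ↦ min N (k / n)) = ∑ p ∈ s, f p.1 * f p.2 := by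
    rw [staircaseSum_eq_sum_filter f hPN fun _ _ ↦ min_le_left ..]
    congr 1
    ext p
    simp only [s, mem_filter, mem_product, mem_Icc, le_min_iff]
    have : 1 ≤ p.1 → (p.2 ≤ k / p.1 ↔ p.1 * p.2 ≤ k) := fun h ↦ by
      rw [Nat.le_div_iff_mul_le h, mul_comm]
    grind
  have sum_t : ∑ p ∈ t, f p.1 * f p.2 = ∑ p ∈ s, f p.1 * f p.2 :=
    sum_bij' (fun p _ ↦ p.swap) (fun p _ ↦ p.swap) (by grind) (by grind) (by simp) (by simp)
      fun p _ ↦ mul_comm _ _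
  rw [staircaseSum_eq_sum_filter f hPN fun _ _ ↦ hPN, ← inter, ← union, sum_union_inter, sum_t,
    sum_s, two_mul]

variable {d : ℕ} [NeZero d] {N P k T J : ℕ}

theorem norm_mul_sum_Icc_mul_stdAddChar_le (a : ℕ → ℂ) {n y : ℕ} (hn : n ∈ Icc 1 N) (hyN : y ≤ N)
    (hyk : n * y ≤ k) {x : ZMod d} (hx : x ≠ 0) :
    ‖a n * ∑ m ∈ Icc 1 y, a m * ZMod.stdAddChar (-((m : ZMod d) * x))‖ ≤
      headVariation a N ^ 2 * min (k / n : ℝ) (d / x.valMinAbs.natAbs) := by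
  obtain ⟨hn₁, hnN⟩ := mem_Icc.1 hn
  have hV := headVariation_nonneg a N
  have y_le : (y : ℝ) ≤ k / n := by
    rw [le_div_iff₀' (mod_cast hn₁)]
    exact_mod_cast hyk
  rw [norm_mul, sq, mul_assoc, mul_min_of_nonneg _ _ hV]
  gcongr
  · exact norm_le_headVariation a hn₁ hnN
  · refine le_min ((norm_sum_Icc_mul_stdAddChar_le a hyN _).trans (by gcongr)) ?_
    exact norm_sum_Icc_mul_stdAddChar_le_div a hyN hx

theorem natCast_mul_norm_staircaseSum_sq_eq (hd : 2 ≤ d) (a : ℕ → ℂ) (P : ℕ) (y : ℕ → ℕ)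
    {χ : DirichletCharacter ℂ d} (hχ : χ.IsPrimitive) :
    d * ‖staircaseSum (fun n ↦ a n * χ n) P y‖ ^ 2 =
      ‖∑ p ∈ Icc 1 P ×ˢ univ.erase (0 : ZMod d),
        a p.1 * (∑ m ∈ Icc 1 (y p.1), a m * ZMod.stdAddChar (-((m : ZMod d) * p.2))) *
          (χ p.1 * χ⁻¹ p.2)‖ ^ 2 := by
  have : Fact (1 < d) := ⟨hd⟩
  rw [staircaseSum,
    natCast_mul_norm_sum_mul_sum_sq_eq hχ (Icc 1 P) (fun n ↦ Icc 1 (y n)) (↑) (↑) a a, sum_product]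
  congr! 3 with n
  refine (sum_erase _ ?_).symm
  rw [MulChar.map_zero, mul_zero, mul_zero]

open Classical in
theorem sum_norm_staircaseSum_sq_le (hd : 2 ≤ d) (hNT : N < 2 ^ T) (hdJ : d < 2 ^ J) (a : ℕ → ℂ)
    (hPN : P ≤ N) (hPk : P ^ 2 ≤ k) {y : ℕ → ℕ} (hy : ∀ n ∈ Icc 1 P, y n ≤ N ∧ n * y n ≤ k) :
    ∑ χ : DirichletCharacter ℂ d with χ.IsPrimitive,
      ‖staircaseSum (fun n ↦ a n * χ n) P y‖ ^ 2 ≤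
        500 * (T * J) ^ 2 * (1 + T) * headVariation a N ^ 4 * k * d := by
  have hd0 : (0 : ℝ) < d := mod_cast two_pos.trans_le hd
  set V := headVariation a N
  set c : ℕ × ZMod d → ℂ :=
    fun p ↦ a p.1 * ∑ m ∈ Icc 1 (y p.1), a m * ZMod.stdAddChar (-((m : ZMod d) * p.2))
  set s := Icc 1 P ×ˢ univ.erase (0 : ZMod d)
  have hs (p) (hp : p ∈ s) : 1 ≤ p.1 ∧ p.1 ^ 2 ≤ k ∧ p.1 < 2 ^ T ∧ p.2 ≠ 0 := by
    obtain ⟨hn, hx⟩ := mem_product.1 hp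
    rw [mem_Icc] at hn
    exact ⟨hn.1, (Nat.pow_le_pow_left hn.2 2).trans hPk, (hn.2.trans hPN).trans_lt hNT,
      ne_of_mem_erase hx⟩
  have c_le (p) (hp : p ∈ s) :
      ‖c p‖ ≤ V ^ 2 * min (k / p.1 : ℝ) (d / p.2.valMinAbs.natAbs) := by
    obtain ⟨hn, hx⟩ := mem_product.1 hp
    obtain ⟨hyN, hyk⟩ := hy p.1 hn
    exact norm_mul_sum_Icc_mul_stdAddChar_le a (Icc_subset_Icc_right hPN hn) hyN hyk
      (ne_of_mem_erase hx)
  refine le_of_mul_le_mul_left ?_ hd0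
  calc _ = ∑ χ : DirichletCharacter ℂ d with χ.IsPrimitive,
          ‖∑ p ∈ s, c p * (χ p.1 * χ⁻¹ p.2)‖ ^ 2 := by
        rw [mul_sum]
        exact sum_congr rfl fun χ hχ ↦
          natCast_mul_norm_staircaseSum_sq_eq hd a P y (mem_filter.1 hχ).2
    _ ≤ ∑ χ : DirichletCharacter ℂ d, ‖∑ p ∈ s, c p * (χ p.1 * χ⁻¹ p.2)‖ ^ 2 :=
        sum_le_univ_sum_of_nonneg fun _ ↦ by positivity
    _ ≤ 500 * (T * J) ^ 2 * (1 + T) * (V ^ 2) ^ 2 * k * d ^ 2 :=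
        sum_norm_sum_mul_inv_sq_le_of_norm_le_min hdJ (sq_nonneg V) hs c_le
    _ = _ := by ring

open Classical in
theorem sum_norm_sum_filter_mul_le_sq_le (hd : 2 ≤ d) (hNT : N < 2 ^ T) (hdJ : d < 2 ^ J)
    (a : ℕ → ℂ) (k : ℕ) :
    ∑ χ : DirichletCharacter ℂ d with χ.IsPrimitive,
      ‖∑ p ∈ Icc 1 N ×ˢ Icc 1 N with p.1 * p.2 ≤ k, a p.1 * χ p.1 * (a p.2 * χ p.2)‖ ^ 2 ≤
        5000 * (T * J) ^ 2 * (1 + T) * headVariation a N ^ 4 * k * d := by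
  set P := min k.sqrt N
  set M := 500 * (T * J : ℝ) ^ 2 * (1 + T) * headVariation a N ^ 4 * k * d
  have hPN : P ≤ N := min_le_right _ _
  have hPk : P ^ 2 ≤ k := (Nat.pow_le_pow_left (min_le_left ..) 2).trans k.sqrt_le'
  have region_le : ∑ χ : DirichletCharacter ℂ d with χ.IsPrimitive,
      ‖staircaseSum (fun n ↦ a n * χ n) P (fun n ↦ min N (k / n))‖ ^ 2 ≤ M :=
    sum_norm_staircaseSum_sq_le hd hNT hdJ a hPN hPk fun n _ ↦ ⟨min_le_left .., by
      calc n * min N (k / n) ≤ n * (k / n) := Nat.mul_le_mul_left n (min_le_right ..)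
        _ ≤ k := Nat.mul_div_le k n⟩
  have square_le : ∑ χ : DirichletCharacter ℂ d with χ.IsPrimitive,
      ‖staircaseSum (fun n ↦ a n * χ n) P (fun _ ↦ P)‖ ^ 2 ≤ M :=
    sum_norm_staircaseSum_sq_le hd hNT hdJ a hPN hPk fun n hn ↦ ⟨hPN, by
      calc n * P ≤ P * P := Nat.mul_le_mul_right P (mem_Icc.1 hn).2
        _ ≤ k := sq P ▸ hPk⟩
  have norm_sq_le (u v : ℂ) : ‖2 * u - v‖ ^ 2 ≤ 8 * ‖u‖ ^ 2 + 2 * ‖v‖ ^ 2 := by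
    calc ‖2 * u - v‖ ^ 2 ≤ (2 * ‖u‖ + ‖v‖) ^ 2 := by
          gcongr
          exact (norm_sub_le _ _).trans_eq (by simp)
      _ ≤ _ := by linarith [sq_nonneg (2 * ‖u‖ - ‖v‖)]
  calc _ ≤ ∑ χ : DirichletCharacter ℂ d with χ.IsPrimitive,
          (8 * ‖staircaseSum (fun n ↦ a n * χ n) P (fun n ↦ min N (k / n))‖ ^ 2 +
            2 * ‖staircaseSum (fun n ↦ a n * χ n) P (fun _ ↦ P)‖ ^ 2) :=
        sum_le_sum fun χ _ ↦ by
          rw [eq_sub_of_add_eq (sum_filter_mul_le_add_staircaseSum (fun n ↦ a n * χ n) rfl)]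
          exact norm_sq_le _ _
    _ ≤ 8 * M + 2 * M := by
        rw [sum_add_distrib, ← mul_sum, ← mul_sum]
        gcongr
    _ = _ := by ring

end Hyperbola

section FourthMoment

open Finset

theorem norm_sum_mul_cpow_pow_four (c : ℕ → ℂ) (N : ℕ) (s : ℂ) :
    ‖∑ n ∈ Icc 1 N, c n * (n : ℂ) ^ s‖ ^ 4 =
      ‖∑ p ∈ Icc 1 N ×ˢ Icc 1 N, c p.1 * c p.2 * ((p.1 * p.2 : ℕ) : ℂ) ^ s‖ ^ 2 := by
  rw [show 4 = 2 * 2 from rfl, pow_mul, ← norm_pow, sq (∑ n ∈ _, _), sum_mul_sum, sum_product]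
  congr 2
  refine sum_congr rfl fun n _ ↦ sum_congr rfl fun m _ ↦ ?_
  rw [Nat.cast_mul, natCast_mul_natCast_cpow]
  ring

open Classical in
theorem sumPrimitive_eq_sum {d : ℕ} [NeZero d] (f : DirichletCharacter ℂ d → ℝ) :
    sumPrimitive d f = ∑ χ : DirichletCharacter ℂ d with χ.IsPrimitive, f χ := by
  rw [sumPrimitive, finsum_mem_eq_finite_toFinset_sum _ (Set.toFinite _)]
  congr 1
  ext χ
  simp

open Classical in
theorem integral_sumPrimitive_pow_four_le {d : ℕ} [NeZero d] (c : DirichletCharacter ℂ d → ℕ → ℂ)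
    (N : ℕ) :
    ∫ t : ℝ, sumPrimitive d (fun χ ↦
        ‖∑ n ∈ Icc 1 N, c χ n * (n : ℂ) ^ (-(1 / 2 : ℂ) - I * t)‖ ^ 4) / (t ^ 2 + 1) ≤
      ∫ t : ℝ, (∑ χ : DirichletCharacter ℂ d with χ.IsPrimitive, ‖∑ p ∈ Icc 1 N ×ˢ Icc 1 N,
        c χ p.1 * c χ p.2 * ((p.1 * p.2 : ℕ) : ℂ) ^ (-(1 / 2 : ℂ) - I * t)‖ ^ 2) *
          ((1 / 2) ^ 2 + t ^ 2)⁻¹ := by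
  simp_rw [sumPrimitive_eq_sum, norm_sum_mul_cpow_pow_four, div_eq_mul_inv]
  refine integral_mono_of_nonneg (.of_forall fun t ↦ by positivity) ?_ (.of_forall fun t ↦ ?_)
  · simp_rw [sum_mul]
    refine integrable_finsetSum _ fun χ _ ↦ ?_
    refine integrable_norm_sum_cpow_sq (m := fun p : ℕ × ℕ ↦ p.1 * p.2)
      (fun p ↦ c χ p.1 * c χ p.2) fun p hp ↦ ?_
    exact Nat.mul_pos (mem_Icc.1 (mem_product.1 hp).1).1 (mem_Icc.1 (mem_product.1 hp).2).1
  · beta_reduce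
    gcongr ?_ * ?_
    exact inv_anti₀ (by positivity) (by linarith)

theorem integral_sumPrimitive_pow_four_le_harmonic {d N T J : ℕ} (hd : 2 ≤ d) (hN : 1 ≤ N)
    (hNT : N < 2 ^ T) (hdJ : d < 2 ^ J) (a : ℕ → ℂ) :
    ∫ t : ℝ, sumPrimitive d (fun χ ↦
        ‖∑ n ∈ Icc 1 N, a n * χ (n : ZMod d) * (n : ℂ) ^ (-(1 / 2 : ℂ) - I * t)‖ ^ 4) /
          (t ^ 2 + 1) ≤
      2 * π * (5000 * (T * J) ^ 2 * (1 + T) * headVariation a N ^ 4 * d) * harmonic (N ^ 2) := by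
  have : NeZero d := ⟨by omega⟩
  classical
  refine (integral_sumPrimitive_pow_four_le (fun χ n ↦ a n * χ (n : ZMod d)) N).trans ?_
  refine integral_sum_norm_sum_cpow_sq_le (m := fun p : ℕ × ℕ ↦ p.1 * p.2)
    (c := fun (χ : DirichletCharacter ℂ d) p ↦ a p.1 * χ p.1 * (a p.2 * χ p.2))
    (Nat.one_le_pow _ _ hN) (fun p hp ↦ ?_) fun k _ ↦
    (sum_norm_sum_filter_mul_le_sq_le hd hNT hdJ a k).trans_eq (by ring)
  obtain ⟨h₁, h₂⟩ := mem_product.1 hp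
  rw [mem_Icc] at h₁ h₂
  exact ⟨Nat.mul_pos h₁.1 h₂.1, (Nat.mul_le_mul h₁.2 h₂.2).trans_eq (sq N).symm⟩

theorem one_le_log_of_four_le {x : ℝ} (hx : 4 ≤ x) : 1 ≤ Real.log x :=
  (Real.le_log_iff_exp_le (by linarith)).2 (by linarith [exp_one_lt_three])

theorem natLog_two_add_two_le {n : ℕ} {x : ℝ} (hn : n ≤ x) (hx : 4 ≤ x) :
    (Nat.log 2 n : ℝ) + 2 ≤ 3 * Real.log x := by
  have log_four_le : 2 * Real.log 2 ≤ Real.log x := by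
    rw [← Nat.cast_ofNat, ← Real.log_pow]
    exact Real.log_le_log (by norm_num) (by norm_num [hx])
  have natLog_mul_le : Nat.log 2 n * Real.log 2 ≤ Real.log x := by
    rcases eq_or_ne n 0 with rfl | hn'
    · simpa using (zero_le_one.trans (one_le_log_of_four_le hx))
    rw [← Real.log_pow]
    refine Real.log_le_log (by positivity) (le_trans ?_ hn)
    exact_mod_cast Nat.pow_log_le_self 2 hn'
  nlinarith [Real.log_two_gt_d9, Nat.cast_nonneg (α := ℝ) (Nat.log 2 n)]

theorem harmonic_sq_le {n : ℕ} {x : ℝ} (hn : n ≤ x) (hx : 4 ≤ x) :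
    (harmonic (n ^ 2) : ℝ) ≤ 3 * Real.log x := by
  rcases eq_or_ne n 0 with rfl | hn'
  · simpa using zero_le_one.trans (one_le_log_of_four_le hx)
  have log_le : Real.log n ≤ Real.log x := Real.log_le_log (by positivity) hn
  calc (harmonic (n ^ 2) : ℝ) ≤ 1 + 2 * Real.log n := by
        have := harmonic_le_one_add_log (n ^ 2)
        rw [Nat.cast_pow, Real.log_pow] at this
        exact_mod_cast this
    _ ≤ 3 * Real.log x := by linarith [one_le_log_of_four_le hx]

theorem fourth_moment_log_coeffs_general {d : ℕ} (hd : 2 ≤ d) {X : ℝ} (hX : 2 ≤ X) (a : ℕ → ℂ) :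
    ∫ t : ℝ, sumPrimitive d (fun χ ↦
        ‖∑ n ∈ Icc 1 ⌊X⌋₊, a n * χ (n : ZMod d) * (n : ℂ) ^ (-(1 / 2 : ℂ) - I * t)‖ ^ 4) /
          (t ^ 2 + 1) ≤
      7290000 * π * d * headVariation a ⌊X⌋₊ ^ 4 * Real.log (d * X) ^ 6 := by
  set N := ⌊X⌋₊
  set L := Real.log (d * X)
  have two_le_d : (2 : ℝ) ≤ d := mod_cast hd
  have four_le : 4 ≤ d * X := by nlinarith
  have N_le : N ≤ d * X := (Nat.floor_le (by linarith)).trans (by nlinarith)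
  have T_le := natLog_two_add_two_le N_le four_le
  have J_le := natLog_two_add_two_le (n := d) (by nlinarith) four_le
  have L_nonneg : 0 ≤ L := zero_le_one.trans (one_le_log_of_four_le four_le)
  have := headVariation_nonneg a N
  calc _ ≤ 2 * π * (5000 * ((Nat.log 2 N + 1 : ℕ) * (Nat.log 2 d + 1 : ℕ)) ^ 2 *
            (1 + (Nat.log 2 N + 1 : ℕ)) * headVariation a N ^ 4 * d) * harmonic (N ^ 2) :=
        integral_sumPrimitive_pow_four_le_harmonic hd (Nat.le_floor (by simp; linarith))
          (Nat.lt_pow_succ_log_self one_lt_two N) (Nat.lt_pow_succ_log_self one_lt_two d) a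
    _ ≤ 2 * π * (5000 * ((Nat.log 2 N + 1 : ℕ) * (Nat.log 2 d + 1 : ℕ)) ^ 2 *
            (1 + (Nat.log 2 N + 1 : ℕ)) * headVariation a N ^ 4 * d) * (3 * L) := by
        gcongr
        exact harmonic_sq_le N_le four_le
    _ ≤ 2 * π * (5000 * (3 * L * (3 * L)) ^ 2 * (3 * L) * headVariation a N ^ 4 * d) *
          (3 * L) := by
        gcongr <;> push_cast <;> linarith
    _ = _ := by ring

theorem headVariation_eq_of_monotoneOn {a : ℕ → ℂ} {f : ℕ → ℝ} {N : ℕ} (hN : 1 ≤ N)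
    (ha : ∀ n ∈ Icc 1 N, a n = f n) (hf : MonotoneOn f (Icc 1 N)) (hf₁ : 0 ≤ f 1) :
    headVariation a N = f N := by
  have norm_sub (n) (hn : n ∈ Ico 1 N) : ‖a (n + 1) - a n‖ = f (n + 1) - f n := by
    rw [mem_Ico] at hn
    have hn₀ : n ∈ Icc 1 N := by grind
    have hn₁ : n + 1 ∈ Icc 1 N := by grind
    rw [ha _ hn₀, ha _ hn₁, ← ofReal_sub,
      Complex.norm_of_nonneg (sub_nonneg.2 (hf hn₀ hn₁ n.le_succ))]
  rw [headVariation, ha 1 (left_mem_Icc.2 hN), Complex.norm_of_nonneg hf₁, sum_congr rfl norm_sub,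
    sum_Ico_sub f hN]
  ring

theorem headVariation_le_log {a : ℕ → ℂ} {X Y : ℝ} (hX : 1 ≤ X) (hXY : X ≤ Y) (hY : 4 ≤ Y)
    (ha : (∀ n : ℕ, n ≤ X → a n = (Real.log n : ℂ)) ∨ (∀ n : ℕ, n ≤ X → a n = 1)) :
    headVariation a ⌊X⌋₊ ≤ Real.log Y := by
  have floor_pos : 1 ≤ ⌊X⌋₊ := Nat.le_floor (by simpa using hX)
  have le_of_mem (n) (hn : n ∈ Icc 1 ⌊X⌋₊) : (n : ℝ) ≤ X :=
    (Nat.le_floor_iff (by linarith)).1 (mem_Icc.1 hn).2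
  rcases ha with ha | ha
  · have log_mono : MonotoneOn (fun n : ℕ ↦ Real.log n) (Icc 1 ⌊X⌋₊) := fun m hm n _ hmn ↦
      Real.log_le_log (Nat.cast_pos.2 (mem_Icc.1 hm).1) (Nat.cast_le.2 hmn)
    rw [headVariation_eq_of_monotoneOn floor_pos (fun n hn ↦ ha n (le_of_mem n hn)) log_mono
      (by simp)]
    exact Real.log_le_log (by positivity) ((Nat.floor_le (by linarith)).trans hXY)
  · rw [headVariation_eq_of_monotoneOn (f := 1) floor_pos
      (fun n hn ↦ by simpa using ha n (le_of_mem n hn)) monotoneOn_const zero_le_one]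
    exact one_le_log_of_four_le hY

end FourthMoment

/-- Fourth moment bound for the Dirichlet polynomials with coefficients `log n` or `1`:
`∫_ℝ Σ*_{χ mod d} |Σ_{n ≤ X} a(n) χ(n) n^{-1/2-it}|⁴ dt/(t²+1) ≤ C d (log dX)^{13}`. -/
theorem fourth_moment_log_coeffs :
    ∃ C : ℝ, ∀ d : ℕ, 2 ≤ d → ∀ X : ℝ, 2 ≤ X → ∀ a : ℕ → ℂ,
      ((∀ n : ℕ, (n : ℝ) ≤ X → a n = (Real.log n : ℂ)) ∨
        (∀ n : ℕ, (n : ℝ) ≤ X → a n = 1)) →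
      (∫ t : ℝ, sumPrimitive d (fun χ =>
          ‖∑ n ∈ Finset.Icc 1 ⌊X⌋₊,
            a n * χ (n : ZMod d) * (n : ℂ) ^ (-(1 / 2 : ℂ) - Complex.I * t)‖ ^ 4) / (t ^ 2 + 1))
        ≤ C * d * Real.log (d * X) ^ 13 := by
  refine ⟨7290000 * π, fun d hd X hX a ha ↦ ?_⟩
  have two_le_d : (2 : ℝ) ≤ d := mod_cast hd
  have four_le : 4 ≤ d * X := by nlinarith
  have one_le_log : 1 ≤ Real.log (d * X) := one_le_log_of_four_le four_le
  calc _ ≤ 7290000 * π * d * headVariation a ⌊X⌋₊ ^ 4 * Real.log (d * X) ^ 6 :=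
        fourth_moment_log_coeffs_general hd hX a
    _ ≤ 7290000 * π * d * Real.log (d * X) ^ 4 * Real.log (d * X) ^ 6 := by
        gcongr
        · exact headVariation_nonneg a _
        · exact headVariation_le_log (by linarith) (by nlinarith) four_le ha
    _ = 7290000 * π * d * Real.log (d * X) ^ 10 := by ring
    _ ≤ 7290000 * π * d * Real.log (d * X) ^ 13 := by
        gcongr
        norm_num
end
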